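/- For every Σ⁰₃ set P ⊆ A* over a finite alphabet A, there exist a finite alphabet B, a cellular automaton f on B^ℤ, and a total computable function φ : A* → B* such that for all w ∈ A*: w ∈ P if and only if φ(w) ∈ L(ω̃(f)). In particular, P is many-one reducible to the language of the generic limit set of f. -/

import Mathlib

open Filter Set Function

namespace Gls

variable {A : Type*}

/-- The left shift map on `A^ℤ`. -/
def shift (x : ℤ → A) : ℤ → A := fun i => x (i + 1)

/-- A cellular automaton: a continuous shift-commuting self-map of the full shift. -/
def IsCA [TopologicalSpace A] (f : (ℤ → A) → (ℤ → A)) : Prop :=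
  Continuous f ∧ f ∘ shift = shift ∘ f

/-- The set of limit points of the forward orbit of `x` under `f`. -/
def omegaSet [TopologicalSpace A] (f : (ℤ → A) → (ℤ → A)) (x : ℤ → A) : Set (ℤ → A) :=
  {y | MapClusterPt y atTop fun t => f^[t] x}

/-- The realm of attraction of `Y`. -/
def realm [TopologicalSpace A] (f : (ℤ → A) → (ℤ → A)) (Y : Set (ℤ → A)) : Set (ℤ → A) :=
  {x | omegaSet f x ⊆ Y}

/-- The generic limit set: the intersection of all closed sets whose realm is comeager. -/
def genLimitSet [TopologicalSpace A] (f : (ℤ → A) → (ℤ → A)) : Set (ℤ → A) :=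
  ⋂₀ {C | IsClosed C ∧ realm f C ∈ residual (ℤ → A)}

/-- The word `x_{[i, i+n)}` of length `n` read in the configuration `x` from position `i`. -/
def word (x : ℤ → A) (i : ℤ) (n : ℕ) : List A :=
  (List.range n).map fun k => x (i + k)

/-- The cylinder set `[w]_i`. -/
def cylinder (w : List A) (i : ℤ) : Set (ℤ → A) := {x | word x i w.length = w}

/-- The language of `X`: all finite words occurring in points of `X`. -/
def lang (X : Set (ℤ → A)) : Set (List A) :=
  {w | ∃ x ∈ X, ∃ i : ℤ, word x i w.length = w}


/-- The arithmetical hierarchy over `ℕ`: `NatSigma 0` is the class of computable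
predicates, and a predicate is `NatSigma (n+1)` (i.e. `Σ⁰ₙ₊₁`) if it is of the form
`{a | ∃ k, (a, k) ∈ R}` for a `Π⁰ₙ` relation `R` (i.e. a relation whose complement is `Σ⁰ₙ`). -/
def NatSigma : ℕ → (ℕ → Prop) → Prop
  | 0 => fun P => ComputablePred P
  | (n + 1) => fun P =>
      ∃ R : ℕ → Prop, NatSigma n (fun a => ¬ R a) ∧ ∀ a, P a ↔ ∃ k, R (Nat.pair a k)

/-- A set of words is `Σ⁰ₙ` if, identifying words with natural numbers via the canonical
computable encoding, it is a `Σ⁰ₙ` subset of `ℕ`. -/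
def SigmaLang {A : Type*} [Primcodable A] (n : ℕ) (P : Set (List A)) : Prop :=
  NatSigma n (fun m => ∃ w : List A, Encodable.encode w = m ∧ w ∈ P)

/-- A set of words is `Π⁰ₙ` if its complement is `Σ⁰ₙ`. -/
def PiLang {A : Type*} [Primcodable A] (n : ℕ) (P : Set (List A)) : Prop :=
  SigmaLang n {w | w ∉ P}

section

/-- big-endian value -/
def val (u : List Bool) : ℕ := u.foldl (fun a b => Nat.bit b a) 0

def ucode (n k : ℕ) (z : List Bool) : List Bool :=
  List.replicate (n + 1) true ++ false :: (List.replicate k true ++ false :: z)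

theorem val_snoc (u : List Bool) (b : Bool) : val (u ++ [b]) = Nat.bit b (val u) := by
  simp [val]

theorem val_bits (u : List Bool) : Nat.bits (val (true :: u)) = (true :: u).reverse ∧ val (true :: u) ≠ 0 := by
  induction u using List.reverseRecOn with
  | nil => simp [val]
  | append_singleton u b ih =>
    rw [← List.cons_append, val_snoc]
    constructor
    · rw [Nat.bits_append_bit _ _ (fun h => absurd h ih.2), ih.1]; simp
    · simp [Nat.bit_eq_zero_iff, ih.2]

theorem replicate_cancel (a b : ℕ) (l l' : List Bool)
    (h : List.replicate a true ++ false :: l = List.replicate b true ++ false :: l') :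
    a = b ∧ l = l' := by
  induction a generalizing b with
  | zero =>
    cases b with
    | zero => simpa using h
    | succ b => simp [List.replicate_succ] at h
  | succ a ih =>
    cases b with
    | zero => simp [List.replicate_succ] at h
    | succ b =>
      simp only [List.replicate_succ, List.cons_append, List.cons.injEq, true_and] at h
      have := ih b h
      exact ⟨by omega, this.2⟩

theorem ucode_inj {n k n' k' : ℕ} {z z' : List Bool} (h : val (ucode n k z) = val (ucode n' k' z')) :
    n = n' ∧ k = k' ∧ z = z' := by
  have e : ∀ n k z, ucode n k z = true ::
    (List.replicate n true ++ false :: (List.replicate k true ++ false :: z)) := by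
    intro n k z; simp [ucode, List.replicate_succ]
  have h1 : (ucode n k z).reverse = (ucode n' k' z').reverse := by
    rw [e n k z, e n' k' z'] at h ⊢
    rw [← (val_bits _).1, ← (val_bits _).1, h]
  have h2 := List.reverse_injective h1
  obtain ⟨h3, h4⟩ := replicate_cancel _ _ _ _ h2
  obtain ⟨h5, h6⟩ := replicate_cancel _ _ _ _ h4
  exact ⟨by omega, h5, h6⟩

theorem primrec_replicate {α σ : Type} [Primcodable α] [Primcodable σ] (f : α → ℕ) (hf : Primrec f)
    (c : σ) : Primrec (fun a => List.replicate (f a) c) := by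
  have : Primrec (fun a => (List.range (f a)).map (fun _ => c)) :=
    Primrec.list_map (Primrec.list_range.comp hf) (Primrec.const c).to₂
  refine this.of_eq fun a => ?_
  simp [List.map_const']

theorem primrec_val : Primrec val := by
  refine Primrec.list_foldl (f := fun u : List Bool => u) (g := fun _ => 0)
    (h := fun _ p => Nat.bit p.2 p.1) Primrec.id (Primrec.const 0) ?_
  have : Primrec (fun p : List Bool × ℕ × Bool => cond p.2.2 (2 * p.2.1 + 1) (2 * p.2.1)) := by
    have h2 : Primrec (fun p : List Bool × ℕ × Bool => 2 * p.2.1) :=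
      Primrec.nat_mul.comp (Primrec.const 2) (Primrec.fst.comp Primrec.snd)
    exact Primrec.cond (Primrec.snd.comp Primrec.snd) (Primrec.succ.comp h2) h2
  refine this.of_eq fun p => ?_
  rcases p with ⟨_, a, b⟩
  cases b <;> simp [Nat.bit]

theorem primrec_ucode : Primrec (fun p : ℕ × ℕ × List Bool => ucode p.1 p.2.1 p.2.2) := by
  unfold ucode
  have h1 : Primrec (fun p : ℕ × ℕ × List Bool => List.replicate (p.1 + 1) true) :=
    primrec_replicate _ (Primrec.succ.comp Primrec.fst) _
  have h2 : Primrec (fun p : ℕ × ℕ × List Bool => List.replicate p.2.1 true) :=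
    primrec_replicate _ (Primrec.fst.comp Primrec.snd) _
  refine Primrec.list_append.comp h1 (Primrec.list_cons.comp (Primrec.const false)
    (Primrec.list_append.comp h2 (Primrec.list_cons.comp (Primrec.const false)
      (Primrec.snd.comp Primrec.snd))))

theorem normal_form {A : Type} [Primcodable A] (P : Set (List A)) (hP : SigmaLang 3 P) :
    ∃ (f : ℕ →. ℕ) (Q : ℕ → ℕ → ℕ → Prop), Partrec f ∧
      (∀ n k a a', a' ≤ a → Q n k a → Q n k a') ∧
      (∀ w, w ∈ P ↔ ∃ k, ∀ a, Q (Encodable.encode w) k a) ∧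
      ∀ n k z, (f (val (ucode n k z))).Dom ↔ Q n k z.length := by
  obtain ⟨R1, ⟨R2, ⟨R3, h3, h2⟩, h1⟩, h0⟩ := hP
  obtain ⟨inst, hd⟩ := h3
  let c : ℕ → Bool := fun a => !(decide (¬ R3 a))
  have hc : Computable c := Primrec.not.to_comp.comp hd
  have hcR : ∀ a, c a = true ↔ R3 a := by intro a; simp [c]
  let Q : ℕ → ℕ → ℕ → Prop := fun n k a =>
    ∀ a' ≤ a, ∃ b, R3 (Nat.pair (Nat.pair (Nat.pair n k) a') b)
  let F : ℕ × ℕ → ℕ → Part ℕ := fun p a' =>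
    Nat.rfind (fun b => Part.some (c (Nat.pair (Nat.pair (Nat.pair p.1 p.2) a') b)))
  let S : ℕ × ℕ × List Bool → Part ℕ := fun p =>
    (p.2.2.length + 1).rec (Part.some 0) (fun y IH => IH.bind fun _ => F (p.1, p.2.1) y)
  have hS : Partrec S := by
    refine Partrec.nat_rec (f := fun p : ℕ × ℕ × List Bool => p.2.2.length + 1)
      (g := fun _ => Part.some 0) (h := fun p yi => F (p.1, p.2.1) yi.1) ?_ ?_ ?_
    · exact (Primrec.succ.comp (Primrec.list_length.comp (Primrec.snd.comp Primrec.snd))).to_comp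
    · exact (Computable.const 0).partrec
    · refine Partrec.rfind (p := fun (q : (ℕ × ℕ × List Bool) × ℕ × ℕ) b =>
        (Part.some (c (Nat.pair (Nat.pair (Nat.pair q.1.1 q.1.2.1) q.2.1) b)) : Part Bool)) ?_
      refine Computable.partrec (hc.comp ?_)
      refine Primrec.to_comp ?_
      have f1 : Primrec (fun q : ((ℕ × ℕ × List Bool) × ℕ × ℕ) × ℕ => q.1.1.1) :=
        Primrec.fst.comp (Primrec.fst.comp Primrec.fst)
      have f2 : Primrec (fun q : ((ℕ × ℕ × List Bool) × ℕ × ℕ) × ℕ => q.1.1.2.1) :=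
        Primrec.fst.comp (Primrec.snd.comp (Primrec.fst.comp Primrec.fst))
      have f3 : Primrec (fun q : ((ℕ × ℕ × List Bool) × ℕ × ℕ) × ℕ => q.1.2.1) :=
        Primrec.fst.comp (Primrec.snd.comp Primrec.fst)
      exact Primrec₂.natPair.comp (Primrec₂.natPair.comp (Primrec₂.natPair.comp f1 f2) f3) Primrec.snd
  have hSd : ∀ p : ℕ × ℕ × List Bool, (S p).Dom ↔ Q p.1 p.2.1 p.2.2.length := by
    intro p
    have hF : ∀ a', (F (p.1, p.2.1) a').Dom ↔
        ∃ b, R3 (Nat.pair (Nat.pair (Nat.pair p.1 p.2.1) a') b) := by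
      intro a'
      simp only [F]
      constructor
      · rintro ⟨b, hb, -⟩
        exact ⟨b, (hcR _).1 (by simpa using hb)⟩
      · rintro ⟨b, hb⟩
        exact ⟨b, by simpa using (hcR _).2 hb, by intros; trivial⟩
    have : ∀ m : ℕ, (Nat.rec (Part.some 0) (fun y IH => IH.bind fun _ => F (p.1, p.2.1) y) m : Part ℕ).Dom
        ↔ ∀ a' < m, ∃ b, R3 (Nat.pair (Nat.pair (Nat.pair p.1 p.2.1) a') b) := by
      intro m
      induction m with
      | zero => simp
      | succ m ih =>
        simp only [Part.bind_dom, Nat.lt_succ_iff_lt_or_eq, or_imp, forall_and, forall_eq, exists_prop]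
        rw [ih, hF]
    refine (this (p.2.2.length + 1)).trans ?_
    simp only [Nat.lt_succ_iff, Q]
  let D : ℕ → ℕ → Option (ℕ × ℕ × List Bool) := fun x m =>
    (Encodable.decode (α := ℕ × ℕ × List Bool) m).bind fun p =>
      if val (ucode p.1 p.2.1 p.2.2) = x then some p else none
  have hD : Primrec₂ D := by
    refine Primrec.option_bind (Primrec.decode.comp Primrec.snd) ?_
    refine Primrec.ite ?_ (Primrec.option_some.comp Primrec.snd) (Primrec.const none)
    exact PrimrecRel.comp Primrec.eq (primrec_val.comp (primrec_ucode.comp Primrec.snd))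
      (Primrec.fst.comp Primrec.fst)
  refine ⟨fun x => (Nat.rfindOpt (D x)).bind S, Q, ?_, ?_, ?_, ?_⟩
  · exact (Partrec.rfindOpt hD.to_comp).bind (hS.comp Computable.snd).to₂
  · exact fun n k a a' h hq b hb => hq b (hb.trans h)
  · intro w
    have := h0 (Encodable.encode w)
    simp only [Encodable.encode_inj, exists_eq_left] at this
    rw [this]
    refine exists_congr fun k => ?_
    have h1' := h1 (Nat.pair (Encodable.encode w) k)
    rw [not_iff_comm] at h1'
    rw [← h1', not_exists]
    constructor
    · intro h a a' _
      exact (h2 _).1 (h a')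
    · intro h a
      exact (h2 _).2 (h a a le_rfl)
  · intro n k z
    have : Nat.rfindOpt (D (val (ucode n k z))) = Part.some (n, k, z) := by
      have hd : (Nat.rfindOpt (D (val (ucode n k z)))).Dom := by
        rw [Nat.rfindOpt_dom]
        refine ⟨Encodable.encode (n, k, z), (n, k, z), ?_⟩
        simp only [D, Encodable.encodek, Option.bind_some, if_true, Option.mem_def]
      obtain ⟨p, hp⟩ := Part.dom_iff_mem.1 hd
      obtain ⟨m, hm⟩ := Nat.rfindOpt_spec hp
      simp only [D, Option.mem_def, Option.bind_eq_some_iff] at hm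
      obtain ⟨q, hq, h4⟩ := hm
      split_ifs at h4 with h5
      obtain ⟨e1, e2, e3⟩ := ucode_inj h5
      rw [Part.eq_some_iff]
      have : p = (n, k, z) := by
        rw [← Option.some.inj h4]; ext <;> simp_all
      rw [← this]; exact hp
    show (Part.bind _ _).Dom ↔ _
    rw [this, Part.bind_some, hSd]

end

section

section TM
open Turing Turing.ToPartrec Turing.PartrecToTM2

def bitG (b : Bool) : Γ' := cond b Γ'.bit1 Γ'.bit0

theorem trNat_bit (b : Bool) (n : ℕ) (h : n ≠ 0) : trNat (Nat.bit b n) = bitG b :: trNat n := by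
  have hn : ∃ p : PosNum, (n : Num) = Num.pos p := by
    cases hc : (n : Num) with
    | zero =>
      exfalso; apply h
      have := congrArg (fun x : Num => (x : ℕ)) hc
      simpa using this
    | pos p => exact ⟨p, rfl⟩
  obtain ⟨p, hp⟩ := hn
  have h1 : ((Nat.bit b n : ℕ) : Num) = Num.bit0 (n : Num) + (if b then 1 else 0) := by
    cases b
    · apply Num.to_nat_inj.1; simp [Nat.bit]; left; rfl
    · apply Num.to_nat_inj.1; simp [Nat.bit]; left; rfl
  unfold trNat
  rw [h1, hp]
  cases b
  · rfl
  · rfl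

theorem trNat_val (u : List Bool) : trNat (val (true :: u)) = ((true :: u).map bitG).reverse := by
  induction u using List.reverseRecOn with
  | nil =>
    simp [val, bitG, trNat]; rfl
  | append_singleton u b ih =>
    rw [← List.cons_append, val_snoc, trNat_bit _ _ (val_bits u).2, ih]
    simp

theorem trInit_of {K : Type} [DecidableEq K] {Γ : K → Type} (k : K) (L l : List (Γ k)) (a : Γ k)
    (h : L.reverse = a :: l) : TM2to1.trInit k L = (true, update (fun _ => none) k (some a)) ::
      l.map fun a => (false, update (fun _ => none) k (some a)) := by
  simp only [TM2to1.trInit, h]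
  rfl

theorem exists_tm0 (f : ℕ →. ℕ) (hf : Partrec f) :
    ∃ (Γ : Type) (_ : Inhabited Γ) (_ : Finite Γ) (Λ : Type) (_ : Inhabited Λ)
      (M : TM0.Machine Γ Λ) (S : Set Λ), S.Finite ∧ TM0.Supports M S ∧
      ∃ (bt : Γ) (ib : Bool → Γ), ∀ u, (TM0.eval M (bt :: (true :: u).map ib)).Dom ↔
        (f (val (true :: u))).Dom := by
  have hf' := Nat.Partrec'.part_iff₁.2 hf
  obtain ⟨c, hc⟩ := Code.exists_code hf'
  let _ : Inhabited PartrecToTM2.Λ' := ⟨trNormal c Cont'.halt⟩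
  have hS2 : TM2.Supports tr (codeSupp c Cont'.halt) := PartrecToTM2.tr_supports c Cont'.halt
  have hS1 := TM2to1.tr_supports _ hS2
  have hS0 := TM1to0.tr_supports _ hS1
  refine ⟨TM2to1.Γ' K' (fun _ => PartrecToTM2.Γ'), inferInstance, ?_, _, inferInstance, TM1to0.tr (TM2to1.tr tr), _, Finset.finite_toSet _, hS0, (true, update (fun _ => none) K'.main (some Γ'.cons)), fun b => (false, update (fun _ => none) K'.main (some (bitG b))), ?_⟩
  · have : Finite K' := Finite.of_injective
      (fun k => match k with | K'.main => (0 : Fin 4) | K'.rev => 1 | K'.aux => 2 | K'.stack => 3)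
      (by intro a b h; cases a <;> cases b <;> first | rfl | simp at h)
    have h2 : Finite (K' → Option PartrecToTM2.Γ') := inferInstance
    exact (inferInstance : Finite (Bool × (K' → Option PartrecToTM2.Γ')))
  · intro u
    have h1 : ((true, update (fun _ => none) K'.main (some Γ'.cons)) :: (true :: u).map
       (fun b => (false, update (fun _ => none) K'.main (some (bitG b)))) : List (TM2to1.Γ' K' (fun _ => PartrecToTM2.Γ'))) =
       TM2to1.trInit K'.main (trList [val (true :: u)]) := by
      have hr : (trList [val (true :: u)]).reverse = Γ'.cons :: (true :: u).map bitG := by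
        rw [trList, trList, trNat_val]; simp
      refine Eq.symm (trInit_of _ _ _ _ hr |>.trans ?_)
      rw [List.map_map]
      rfl
    rw [h1, TM1to0.tr_eval]
    refine (TM2to1.tr_eval_dom tr K'.main _).trans ?_
    have h2 : (TM2.eval tr K'.main (trList [val (true :: u)])).Dom ↔
      (StateTransition.eval (TM2.step tr) (init c [val (true :: u)])).Dom := by
      have : (TM2.init K'.main (trList [val (true :: u)]) : TM2.Cfg (fun _ : K' => PartrecToTM2.Γ') PartrecToTM2.Λ' (Option Γ')) = init c [val (true :: u)] := by
        simp only [TM2.init, init]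
        congr 1
        funext k; cases k <;> rfl
      rw [← this]; rfl
    rw [h2, PartrecToTM2.tr_eval]
    have h3 := hc ⟨[val (true :: u)], rfl⟩
    simp only at h3
    rw [h3]
    rfl
end TM

end

section

/-- one-sided CA step -/
def gstep {W : Type} (rule : W → W → W → W) (rule0 : W → W → W) (y : ℕ → W) : ℕ → W
  | 0 => rule0 (y 0) (y 1)
  | (j + 1) => rule (y j) (y (j + 1)) (y (j + 2))

/-- initial row for input `u` -/
def row0 {W : Type} (boot blank : W) (inp : Bool → W) (u : List Bool) (j : ℕ) : W :=
  (boot :: u.map inp).getD j blank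

section Mach
open Turing

inductive Hd (Q : Type) where
  | none : Hd Q
  | boot : Hd Q
  | head : Q → Bool → Hd Q
  | tok : Hd Q

variable {Γ Q : Type} (M : Q → Γ → Option (Q × TM0.Stmt Γ)) (q0 : Q)

def symb (w : Γ × Γ × Hd Q) (sd : Bool) : Γ := cond sd w.1 w.2.1

def ownA (w : Γ × Γ) (sd : Bool) : Option (Q × TM0.Stmt Γ) → Γ × Γ × Hd Q
  | none => (w.1, w.2, Hd.tok)
  | some (q, TM0.Stmt.write a) => (cond sd a w.1, cond sd w.2 a, Hd.head q sd)
  | some (_, TM0.Stmt.move _) => (w.1, w.2, Hd.none)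

def own : Γ × Γ × Hd Q → Γ × Γ × Hd Q
  | (a, b, Hd.none) => (a, b, Hd.none)
  | (a, b, Hd.boot) => (a, b, Hd.head q0 true)
  | (a, b, Hd.tok) => (a, b, Hd.none)
  | (a, b, Hd.head q sd) => ownA (a, b) sd (M q (cond sd a b))

def outA (wantR sd : Bool) : Option (Q × TM0.Stmt Γ) → Hd Q
  | some (q, TM0.Stmt.move Dir.right) => if sd = wantR then Hd.head q sd else Hd.none
  | some (q, TM0.Stmt.move Dir.left) => if sd = wantR then Hd.none else Hd.head q sd
  | _ => Hd.none

def outR : Γ × Γ × Hd Q → Hd Q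
  | (a, b, Hd.head q sd) => outA true sd (M q (cond sd a b))
  | _ => Hd.none

def outL : Γ × Γ × Hd Q → Hd Q
  | (a, b, Hd.head q sd) => outA false sd (M q (cond sd a b))
  | (_, _, Hd.tok) => Hd.tok
  | _ => Hd.none

def flipH : Hd Q → Hd Q
  | Hd.head q sd => Hd.head q (!sd)
  | x => x

def orH : Hd Q → Hd Q → Hd Q
  | Hd.none, x => x
  | x, _ => x

def mrule (l c r : Γ × Γ × Hd Q) : Γ × Γ × Hd Q :=
  ((own M q0 c).1, (own M q0 c).2.1, orH (own M q0 c).2.2 (orH (outR M l) (outL M r)))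

def mrule0 (c r : Γ × Γ × Hd Q) : Γ × Γ × Hd Q :=
  ((own M q0 c).1, (own M q0 c).2.1, orH (own M q0 c).2.2 (orH (flipH (outL M c)) (outL M r)))

def MInv [Inhabited Γ] (q : Q) (T : Tape Γ) (y : ℕ → Γ × Γ × Hd Q) (j : ℕ) (sd : Bool) : Prop :=
  ∀ i : ℕ, y i = (T.nth (i - cond sd (j : ℤ) (-1 - j)), T.nth (-1 - i - cond sd (j : ℤ) (-1 - j)),
    if i = j then Hd.head q sd else Hd.none)

def nextT [Inhabited Γ] (T : Tape Γ) : TM0.Stmt Γ → Tape Γ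
  | TM0.Stmt.move d => T.move d
  | TM0.Stmt.write a => T.write a

theorem minv_none [Inhabited Γ] (q : Q) (T : Tape Γ) (y : ℕ → Γ × Γ × Hd Q) (j : ℕ) (sd : Bool)
    (h : MInv q T y j sd) (hM : M q T.head = none) (i : ℕ) :
    (gstep (mrule M q0) (mrule0 M q0) y i).2.2 = if i = j then Hd.tok else Hd.none := by
  have hs : y j = (T.nth (j - cond sd (j : ℤ) (-1 - j)), T.nth (-1 - j - cond sd (j : ℤ) (-1 - j)), Hd.head q sd) := by
    rw [h j]; simp
  have hsym : cond sd (y j).1 (y j).2.1 = T.head := by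
    rw [hs]; cases sd <;> simp [Tape.nth_zero]
  have hR : ∀ i, outR M (y i) = Hd.none := by
    intro i
    by_cases hi : i = j
    · subst hi; rw [hs] at hsym ⊢; simp only at hsym
      simp only [outR, hsym, hM, outA]
    · rw [h i, if_neg hi]; rfl
  have hL : ∀ i, outL M (y i) = Hd.none := by
    intro i
    by_cases hi : i = j
    · subst hi; rw [hs] at hsym ⊢; simp only at hsym
      simp only [outL, hsym, hM, outA]
    · rw [h i, if_neg hi]; rfl
  have hO : (own M q0 (y i)).2.2 = if i = j then Hd.tok else Hd.none := by
    by_cases hi : i = j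
    · subst hi; rw [hs] at hsym ⊢; simp only at hsym
      simp only [own, hsym, hM, ownA, if_true]
    · rw [h i, if_neg hi]; simp [own, hi]
  cases i with
  | zero => simp only [gstep, mrule0, hR, hL, hO, flipH]; split_ifs <;> rfl
  | succ i => simp only [gstep, mrule, hR, hL, hO]; split_ifs <;> rfl

theorem minv_some [Inhabited Γ] (q : Q) (T : Tape Γ) (y : ℕ → Γ × Γ × Hd Q) (j : ℕ) (sd : Bool)
    (h : MInv q T y j sd) (q' : Q) (s : TM0.Stmt Γ) (hM : M q T.head = some (q', s)) :
    ∃ j' sd', MInv q' (nextT T s) (gstep (mrule M q0) (mrule0 M q0) y) j' sd' := by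
  have hs : y j = (T.nth (j - cond sd (j : ℤ) (-1 - j)), T.nth (-1 - j - cond sd (j : ℤ) (-1 - j)), Hd.head q sd) := by
    rw [h j]; simp
  have hsym : cond sd (y j).1 (y j).2.1 = T.head := by
    rw [hs]; cases sd <;> simp [Tape.nth_zero]
  have hyj : y j = ((y j).1, (y j).2.1, Hd.head q sd) := by
    rw [hs]
  have hR : ∀ i, outR M (y i) = if i = j then outA true sd (some (q', s)) else Hd.none := by
    intro i
    by_cases hi : i = j
    · subst hi; rw [hyj]
      simp only [outR, hsym, hM, if_true]
    · rw [h i, if_neg hi, if_neg hi]; rfl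
  have hL : ∀ i, outL M (y i) = if i = j then outA false sd (some (q', s)) else Hd.none := by
    intro i
    by_cases hi : i = j
    · subst hi; rw [hyj]
      simp only [outL, hsym, hM, if_true]
    · rw [h i, if_neg hi, if_neg hi]; rfl
  have hO : ∀ i, (own M q0 (y i)) = if i = j then ownA ((y j).1, (y j).2.1) sd (some (q', s)) else (T.nth (i - cond sd (j : ℤ) (-1 - j)), T.nth (-1 - i - cond sd (j : ℤ) (-1 - j)), Hd.none) := by
    intro i
    by_cases hi : i = j
    · subst hi; rw [if_pos rfl, hyj]
      simp only [own, hsym, hM]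
    · rw [h i, if_neg hi, if_neg hi]; simp [own]
  have hg : ∀ i, gstep (mrule M q0) (mrule0 M q0) y i = ((own M q0 (y i)).1, (own M q0 (y i)).2.1,
      orH (own M q0 (y i)).2.2 (orH (if i = 0 then flipH (outL M (y 0)) else outR M (y (i-1))) (outL M (y (i+1))))) := by
    intro i; cases i <;> simp [gstep, mrule, mrule0]
  rw [hs] at hO
  cases s with
  | write a =>
    refine ⟨j, sd, fun i => ?_⟩
    rw [hg, hO, hL, hL, hR]
    simp only [outA, ite_self, flipH, nextT, Tape.write_nth]
    by_cases hi : i = j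
    · subst hi
      simp only [if_true, ownA, orH]
      cases sd
      · simp; omega
      · simp; omega
    · simp only [if_neg hi, orH]
      have h1 : ¬ ((i : ℤ) - cond sd (j : ℤ) (-1 - j) = 0) := by cases sd <;> simp <;> omega
      have h2 : ¬ (-1 - (i : ℤ) - cond sd (j : ℤ) (-1 - j) = 0) := by cases sd <;> simp <;> omega
      simp only [if_neg h1, if_neg h2]
  | move d =>
    have hO' : ∀ i, own M q0 (y i) = (T.nth (i - cond sd (j : ℤ) (-1 - j)), T.nth (-1 - i - cond sd (j : ℤ) (-1 - j)), Hd.none) := by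
      intro i; rw [hO]; split_ifs with hi
      · subst hi; simp [ownA]
      · rfl
    by_cases hd : (sd = true ↔ d = Dir.right)
    · refine ⟨j + 1, sd, fun i => ?_⟩
      have hA : outA true sd (some ((q', TM0.Stmt.move d) : Q × TM0.Stmt Γ)) = Hd.head q' sd := by
        revert hd; cases sd <;> cases d <;> simp [outA]
      have hB : outA false sd (some ((q', TM0.Stmt.move d) : Q × TM0.Stmt Γ)) = Hd.none := by
        revert hd; cases sd <;> cases d <;> simp [outA]
      rw [hg, hO', hL, hL, hR, hA, hB]
      simp only [ite_self, flipH, orH, nextT]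
      refine Prod.ext ?_ (Prod.ext ?_ ?_)
      · clear hA hB hO hO' hR hL hg hs hsym hyj h hM; revert hd; cases sd <;> cases d <;> simp [Tape.move_left_nth, Tape.move_right_nth] <;> congr 1 <;> ring
      · clear hA hB hO hO' hR hL hg hs hsym hyj h hM; revert hd; cases sd <;> cases d <;> simp [Tape.move_left_nth, Tape.move_right_nth] <;> congr 1 <;> ring
      · by_cases h1 : i = j + 1
        · subst h1; simp [orH]
        · simp only [if_neg h1]
          by_cases h0 : i = 0
          · simp [h0, orH]
          · rw [if_neg h0, if_neg (by omega)]
    · have hA : outA true sd (some ((q', TM0.Stmt.move d) : Q × TM0.Stmt Γ)) = Hd.none := by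
        revert hd; cases sd <;> cases d <;> simp [outA]
      have hB : outA false sd (some ((q', TM0.Stmt.move d) : Q × TM0.Stmt Γ)) = Hd.head q' sd := by
        revert hd; cases sd <;> cases d <;> simp [outA]
      cases j with
      | zero =>
        refine ⟨0, !sd, fun i => ?_⟩
        rw [hg, hO', hL, hL, hR, hA, hB]
        simp only [ite_self, flipH, orH, nextT]
        refine Prod.ext ?_ (Prod.ext ?_ ?_)
        · clear hA hB hO hO' hR hL hg hs hsym hyj h hM; revert hd; cases sd <;> cases d <;> simp [Tape.move_left_nth, Tape.move_right_nth] <;> congr 1 <;> ring 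
        · clear hA hB hO hO' hR hL hg hs hsym hyj h hM; revert hd; cases sd <;> cases d <;> simp [Tape.move_left_nth, Tape.move_right_nth] <;> congr 1 <;> ring
        · by_cases h0 : i = 0
          · simp [h0, orH, flipH]
          · simp [h0, orH]
      | succ j =>
        refine ⟨j, sd, fun i => ?_⟩
        rw [hg, hO', hL, hL, hR, hA, hB]
        simp only [ite_self, orH, nextT]
        refine Prod.ext ?_ (Prod.ext ?_ ?_)
        · clear hA hB hO hO' hR hL hg hs hsym hyj h hM; revert hd; cases sd <;> cases d <;> simp [Tape.move_left_nth, Tape.move_right_nth] <;> congr 1 <;> ring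
        · clear hA hB hO hO' hR hL hg hs hsym hyj h hM; revert hd; cases sd <;> cases d <;> simp [Tape.move_left_nth, Tape.move_right_nth] <;> congr 1 <;> ring
        · by_cases h1 : i = j
          · subst h1; simp [orH, flipH]
          · simp [h1, orH, flipH]

theorem tok_step (y : ℕ → Γ × Γ × Hd Q) (j : ℕ)
    (h : ∀ i, (y i).2.2 = if i = j then Hd.tok else Hd.none) :
    ∀ i, (gstep (mrule M q0) (mrule0 M q0) y i).2.2 = if i = j - 1 then Hd.tok else Hd.none := by
  have hy : ∀ i, y i = ((y i).1, (y i).2.1, if i = j then Hd.tok else Hd.none) := by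
    intro i; rw [← h i]
  have hR : ∀ i, outR M (y i) = Hd.none := by
    intro i; rw [hy i]; split_ifs <;> rfl
  have hL : ∀ i, outL M (y i) = if i = j then Hd.tok else Hd.none := by
    intro i; rw [hy i]; split_ifs <;> rfl
  have hO : ∀ i, (own M q0 (y i)).2.2 = Hd.none := by
    intro i; rw [hy i]; split_ifs <;> rfl
  intro i
  cases i with
  | zero =>
    simp only [gstep, mrule0, hO, hL, orH]
    rcases j with _ | _ | j <;> simp [flipH, orH]
  | succ i =>
    simp only [gstep, mrule, hO, hL, hR, orH]
    by_cases h1 : i + 2 = j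
    · rw [if_pos h1, if_pos (by omega)]
    · rw [if_neg h1, if_neg (by omega)]
end Mach

end

section

section Mach
open Turing

theorem mk1_nth {Γ : Type} [Inhabited Γ] (l : List Γ) (i : ℕ) :
    (Tape.mk₁ l).nth i = l.getD i default := by
  rw [Tape.mk₁, Tape.mk₂, Tape.mk'_nth_nat, ListBlank.nth_mk, List.getD_default_eq_getI]

theorem mk1_nth_neg {Γ : Type} [Inhabited Γ] (l : List Γ) (i : ℕ) :
    (Tape.mk₁ l).nth (-1 - (i : ℤ)) = default := by
  have : (-1 - (i : ℤ)) = Int.negSucc i := by rw [Int.negSucc_eq]; ring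
  rw [this]
  show ListBlank.nth (ListBlank.mk []) i = default
  rw [ListBlank.nth_mk, List.getI_nil]

theorem exists_machine (f : ℕ →. ℕ) (hf : Partrec f) :
    ∃ (W : Type) (_ : Finite W) (rule : W → W → W → W) (rule0 : W → W → W) (boot blank : W)
      (inp : Bool → W) (acc : W → Prop),
      (∀ l c r, (l = boot ∨ l = blank ∨ ∃ b, l = inp b) → (c = blank ∨ ∃ b, c = inp b) →
        (r = blank ∨ ∃ b, r = inp b) → rule l c r = c) ∧
      ∀ u, (∃ t, acc ((gstep rule rule0)^[t] (row0 boot blank inp (true :: u)) 0)) ↔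
        (f (val (true :: u))).Dom := by
  obtain ⟨Γ, iΓ, fΓ, Λ, iΛ, M, S, hS, hsupp, bt, ib, hE⟩ := exists_tm0 f hf
  have fS : Finite S := hS
  have hs2 : ∀ {q a q' s}, (q', s) ∈ M q a → q ∈ S → q' ∈ S := hsupp.2
  have hM' : ∀ (q : S) (a : Γ), ∃ o : Option (S × TM0.Stmt Γ),
      o.map (fun p => ((p.1 : Λ), p.2)) = M q a := by
    intro q a
    cases h : M q a with
    | none => exact ⟨none, rfl⟩
    | some p => exact ⟨some (⟨p.1, hs2 (q := q) (a := a) (s := p.2) h q.2⟩, p.2), rfl⟩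
  choose M' hM' using hM'
  let q0 : S := ⟨default, hsupp.1⟩
  have fHd : Finite (Hd S) := by
    refine Finite.of_injective (β := Option (Option (Option (S × Bool)))) (fun h => match h with
      | Hd.none => none
      | Hd.boot => some none
      | Hd.tok => some (some none)
      | Hd.head q b => some (some (some (q, b)))) ?_
    intro a b h
    cases a <;> cases b <;> simp_all
  refine ⟨Γ × Γ × Hd S, inferInstance, mrule M' q0, mrule0 M' q0, (bt, default, Hd.boot),
    (default, default, Hd.none), fun b => (ib b, default, Hd.none), fun w => w.2.2 = Hd.tok, ?_, ?_⟩
  · rintro l c r hl hc hr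
    have h1 : outR M' l = Hd.none := by
      rcases hl with rfl | rfl | ⟨b, rfl⟩ <;> rfl
    have h2 : outL M' r = Hd.none := by
      rcases hr with rfl | ⟨b, rfl⟩ <;> rfl
    have h3 : own M' q0 c = c := by
      rcases hc with rfl | ⟨b, rfl⟩ <;> rfl
    have h4 : c.2.2 = Hd.none := by
      rcases hc with rfl | ⟨b, rfl⟩ <;> rfl
    simp only [mrule, h1, h2, h3, orH, h4]
    rw [← h4]
  · intro u
    rw [← hE u]
    set y0 := row0 ((bt, default, Hd.boot) : Γ × Γ × Hd S) (default, default, Hd.none)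
      (fun b => (ib b, default, Hd.none)) (true :: u) with hy0
    set g := gstep (mrule M' q0) (mrule0 M' q0) with hg
    have hy0z : y0 0 = (bt, default, Hd.boot) := rfl
    have hy0s : ∀ i, y0 (i + 1) = (((true :: u).map ib).getD i default, default, Hd.none) := by
      intro i
      simp only [hy0, row0, List.getD_cons_succ]
      by_cases h : i < (true :: u).length
      · rw [List.getD_eq_getElem _ _ (by simpa using h), List.getD_eq_getElem _ _ (by simpa using h)]
        simp only [List.getElem_map]
      · rw [List.getD_eq_default _ _ (by simpa using h), List.getD_eq_default _ _ (by simpa using h)]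
    have hinit : MInv q0 (Tape.mk₁ (bt :: (true :: u).map ib)) (g y0) 0 true := by
      intro i
      simp only [cond_true, Nat.cast_zero, sub_zero]
      rw [mk1_nth, mk1_nth_neg]
      cases i with
      | zero =>
        show mrule0 M' q0 (y0 0) (y0 1) = _
        rw [hy0z, hy0s]; simp [mrule0, own, outL, orH]
      | succ i =>
        show mrule M' q0 (y0 i) (y0 (i + 1)) (y0 (i + 2)) = _
        have : outR M' (y0 i) = Hd.none := by
          cases i with
          | zero => rw [hy0z]; rfl
          | succ i => rw [hy0s]; rfl
        rw [mrule, this, hy0s, hy0s]; simp [own, outL, orH]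
    have hstep_none : ∀ (q : S) (T : Tape Γ), TM0.step M ⟨q, T⟩ = none ↔ M' q T.head = none := by
      intro q T
      simp only [TM0.step, Option.map_eq_none_iff, ← hM']
    have hstep_some : ∀ (q : S) (T : Tape Γ) (q' : S) s, M' q T.head = some (q', s) →
        TM0.step M ⟨q, T⟩ = some ⟨q', nextT T s⟩ := by
      intro q T q' s h
      simp only [TM0.step, ← hM', h, Option.map_some]
      cases s <;> rfl
    have hev : (TM0.eval M (bt :: (true :: u).map ib)).Dom ↔
      (StateTransition.eval (TM0.step M) (TM0.init (bt :: (true :: u).map ib))).Dom := Iff.rfl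
    rw [hev]
    constructor
    · rintro ⟨t, ht⟩
      by_contra hnd
      have hinv : ∀ t, ∃ (q : S) (T : Tape Γ) (j : ℕ) (sd : Bool), MInv q T (g^[t + 1] y0) j sd ∧
          StateTransition.Reaches (TM0.step M) (TM0.init (bt :: (true :: u).map ib)) ⟨q, T⟩ := by
        intro t
        induction t with
        | zero => exact ⟨q0, _, 0, true, hinit, Relation.ReflTransGen.refl⟩
        | succ t ih =>
          obtain ⟨q, T, j, sd, h1, h2⟩ := ih
          rw [iterate_succ_apply']
          cases hq : M' q T.head with
          | none =>
            exfalso; apply hnd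
            exact Part.dom_iff_mem.2 ⟨_, StateTransition.mem_eval.2 ⟨h2, (hstep_none q T).2 hq⟩⟩
          | some p =>
            obtain ⟨j', sd', h3⟩ := minv_some M' q0 q T _ j sd h1 p.1 p.2 hq
            exact ⟨p.1, _, j', sd', h3, h2.tail (hstep_some q T p.1 p.2 hq)⟩
      cases t with
      | zero => simp [hy0z] at ht
      | succ t =>
        obtain ⟨q, T, j, sd, h1, -⟩ := hinv t
        rw [h1 0] at ht
        simp only at ht
        split_ifs at ht
    · intro hd
      obtain ⟨c, hc⟩ := Part.dom_iff_mem.1 hd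
      obtain ⟨hr, hn⟩ := StateTransition.mem_eval.1 hc
      have hinv : ∃ (q : S) (T : Tape Γ) (t j : ℕ) (sd : Bool), c = ⟨q, T⟩ ∧
          MInv q T (g^[t] y0) j sd := by
        clear hn hc
        induction hr with
        | refl => exact ⟨q0, _, 1, 0, true, rfl, hinit⟩
        | tail hr hs ih =>
          obtain ⟨q, T, t, j, sd, rfl, h1⟩ := ih
          cases hq : M' q T.head with
          | none =>
            rw [(hstep_none q T).2 hq] at hs; cases hs
          | some p =>
            obtain ⟨j', sd', h3⟩ := minv_some M' q0 q T _ j sd h1 p.1 p.2 hq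
            rw [hstep_some q T p.1 p.2 hq] at hs
            refine ⟨p.1, _, t + 1, j', sd', (Option.some.inj hs).symm, ?_⟩
            rw [iterate_succ_apply']; exact h3
      obtain ⟨q, T, t, j, sd, rfl, h1⟩ := hinv
      have h2 := minv_none M' q0 q T _ j sd h1 ((hstep_none q T).1 hn)
      rw [← hg] at h2
      have h3 : ∀ k i, (g^[t + 1 + k] y0 i).2.2 = if i = j - k then Hd.tok else Hd.none := by
        intro k
        induction k with
        | zero => intro i; rw [add_zero, iterate_succ_apply', h2]; simp
        | succ k ih =>
          intro i
          rw [← add_assoc, iterate_succ_apply']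
          rw [tok_step M' q0 _ _ ih]
          rfl
      refine ⟨t + 1 + j, ?_⟩
      show (g^[t + 1 + j] y0 0).2.2 = Hd.tok
      rw [h3]; simp
end Mach

end

section

theorem word_eq {B : Type} (y : ℤ → B) (i : ℤ) (n : ℕ) :
    word y i n = (List.range n).map (fun k : ℕ => y (i + (k : ℤ))) := by
  unfold word
  have : ∀ l : List ℕ, ((do let a ← l; pure (a : ℤ)) : List ℤ) = l.map (fun k : ℕ => (k : ℤ)) := by
    intro l; induction l <;> simp_all
  rw [this, List.map_map]; rfl

section Topo
open Topology
variable {B : Type} [TopologicalSpace B] [DiscreteTopology B] [Finite B]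

theorem isClopen_word (s : List B) (i : ℤ) : IsClopen {y : ℤ → B | word y i s.length = s} := by
  have h : {y : ℤ → B | word y i s.length = s} =
      (fun y : ℤ → B => (fun k : Fin s.length => y (i + (k : ℕ)))) ⁻¹'
        {v | List.ofFn v = s} := by
    ext y
    simp only [mem_ofPred_eq, mem_preimage, word_eq]
    rw [List.ofFn_eq_map]
    have : (List.range s.length).map (fun k : ℕ => y (i + (k : ℤ))) =
        (List.finRange s.length).map (fun k : Fin s.length => y (i + ((k : ℕ) : ℤ))) := by
      apply List.ext_getElem <;> simp
    rw [this]
  rw [h]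
  exact (isClopen_discrete _).preimage (by fun_prop)

theorem not_mem_lang (f : (ℤ → B) → (ℤ → B)) (s : List B) (G : Set (ℤ → B))
    (hG : G ∈ residual (ℤ → B))
    (h : ∀ x ∈ G, ∀ i, ∀ᶠ t in atTop, word (f^[t] x) i s.length ≠ s) :
    s ∉ lang (genLimitSet f) := by
  rintro ⟨y, hy, i, hi⟩
  have := hy {y | word y i s.length ≠ s} ⟨?_, ?_⟩
  · exact this hi
  · exact (isClopen_word s i).compl.isClosed
  · refine mem_of_superset hG fun x hx z hz => ?_
    intro hz'
    have h1 := (mapClusterPt_iff_frequently.1 hz) _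
      ((isClopen_word s i).isOpen.mem_nhds hz')
    exact h1 ((h x hx i).mono fun t ht h2 => ht h2)

theorem mem_lang (f : (ℤ → B) → (ℤ → B)) (hf : Continuous f) (s : List B)
    (U : Set (ℤ → B)) (hU : IsOpen U) (hne : U.Nonempty)
    (h : ∀ x0 ∈ U, ∀ M N : ℕ, ∃ x : ℤ → B, (∀ i : ℤ, -M ≤ i → i ≤ M → x i = x0 i) ∧
      ∃ t ≥ N, word (f^[t] x) 0 s.length = s) :
    s ∈ lang (genLimitSet f) := by
  set K : Set (ℤ → B) := {y | word y 0 s.length = s} with hK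
  have hKc : IsClopen K := isClopen_word s 0
  let O : ℕ → Set (ℤ → B) := fun N => {x | ∃ t ≥ N, f^[t] x ∈ K}
  have hO : ∀ N, IsOpen (O N) := by
    intro N
    have : O N = ⋃ t ≥ N, (f^[t]) ⁻¹' K := by ext x; simp [O]
    rw [this]
    exact isOpen_biUnion fun t _ => hKc.isOpen.preimage (hf.iterate t)
  have hUO : ∀ N, U ⊆ closure (O N) := by
    intro N x0 hx0
    rw [mem_closure_iff]
    intro V hV hxV
    rw [isOpen_pi_iff] at hV
    obtain ⟨I, u, hu, hsub⟩ := hV x0 hxV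
    obtain ⟨M, hM⟩ : ∃ M : ℕ, ∀ i ∈ I, -(M : ℤ) ≤ i ∧ i ≤ M := by
      refine ⟨I.sup Int.natAbs, fun i hi => ?_⟩
      have := Finset.le_sup (f := Int.natAbs) hi
      omega
    obtain ⟨x, hx, t, ht, hw⟩ := h x0 hx0 M N
    refine ⟨x, hsub ?_, t, ht, hw⟩
    intro i hi
    rw [hx i (hM i hi).1 (hM i hi).2]
    exact (hu i hi).2
  have key : ∀ C : Set (ℤ → B), IsClosed C → realm f C ∈ residual (ℤ → B) →
      (K ∩ C).Nonempty := by
    intro C hC hr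
    have hres : realm f C ∩ ⋂ N, (O N ∪ (closure U)ᶜ) ∈ residual (ℤ → B) := by
      refine inter_mem hr (countable_iInter_mem.2 fun N => ?_)
      refine residual_of_dense_open ((hO N).union isClosed_closure.isOpen_compl) ?_
      rw [dense_iff_closure_eq, eq_univ_iff_forall]
      intro x
      rw [closure_union]
      by_cases hx : x ∈ closure U
      · left
        exact closure_minimal (hUO N) isClosed_closure hx
      · right; exact subset_closure hx
    obtain ⟨x, hxU, hxr, hxO⟩ := (dense_of_mem_residual hres).inter_open_nonempty U hU hne
    have hfr : ∃ᶠ t in atTop, f^[t] x ∈ K := by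
      rw [frequently_atTop]
      intro N
      have := mem_iInter.1 hxO N
      rcases this with h | h
      · exact h
      · exact absurd (subset_closure hxU) h
    obtain ⟨y, hyK, hy⟩ := hKc.isClosed.isCompact.exists_mapClusterPt_of_frequently hfr
    exact ⟨y, hyK, hxr hy⟩
  have := hKc.isClosed.isCompact.inter_iInter_nonempty
    (fun C : {C : Set (ℤ → B) | IsClosed C ∧ realm f C ∈ residual (ℤ → B)} => C.1)
    (fun C => C.2.1) (fun u => key _ (isClosed_biInter fun C _ => C.2.1) ?_)
  · obtain ⟨y, hyK, hy⟩ := this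
    refine ⟨y, ?_, 0, hyK⟩
    rw [genLimitSet, sInter_eq_iInter]; exact hy
  · have : realm f (⋂ C ∈ u, C.1) = ⋂ C ∈ u, realm f C.1 := by
      ext x; simp only [realm, mem_ofPred_eq, mem_iInter, subset_iInter_iff]
    rw [this]
    exact (biInter_finset_mem u).2 fun C _ => C.2.2

end Topo

end

section

inductive St where
  | z | o | e | von | vrun | vacc | vused
  deriving DecidableEq

inductive Mv where
  | no | h | r | q
  deriving DecidableEq

structure MD (W : Type) where
  rule : W → W → W → W
  rule0 : W → W → W
  boot : W
  blank : W
  inp : Bool → W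
  acc : W → Prop
  hrule : ∀ l c r, (l = boot ∨ l = blank ∨ ∃ b, l = inp b) → (c = blank ∨ ∃ b, c = inp b) →
    (r = blank ∨ ∃ b, r = inp b) → rule l c r = c

structure Cell (W : Type) where
  st : St
  mv : Mv
  w : W

section CA
variable {W : Type} (D : MD W)

open Classical in
noncomputable def inc (l : Cell W) : Mv :=
  if l.mv ≠ Mv.no then l.mv else if l.st = St.vrun ∧ D.acc l.w then Mv.q else Mv.no

open Classical in
noncomputable def locM (l c r : Cell W) : Mv → Cell W
  | Mv.no => if c.mv ≠ Mv.no then ⟨c.st, Mv.no, c.w⟩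
      else if c.st = St.vrun ∧ D.acc c.w then ⟨St.vacc, Mv.no, D.blank⟩
      else ⟨c.st, Mv.no, match c.st with
        | St.vrun => D.rule0 c.w r.w
        | St.vacc => D.blank
        | _ => D.rule l.w c.w r.w⟩
  | Mv.h => match c.st with
    | St.von => ⟨St.vrun, Mv.r, D.boot⟩
    | St.vrun => ⟨St.vused, Mv.h, D.blank⟩
    | St.vacc => ⟨St.vused, Mv.h, D.blank⟩
    | St.vused => ⟨St.vused, Mv.h, D.blank⟩
    | s => ⟨s, Mv.h, D.blank⟩
  | Mv.r => match c.st with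
    | St.e => ⟨St.z, Mv.q, D.blank⟩
    | St.z => ⟨St.z, Mv.r, D.inp false⟩
    | St.o => ⟨St.o, Mv.r, D.inp true⟩
    | _ => ⟨St.von, Mv.r, D.inp false⟩
  | Mv.q => match c.st with
    | St.e => ⟨St.e, Mv.q, D.blank⟩
    | St.z => ⟨St.z, Mv.q, D.blank⟩
    | St.o => ⟨St.o, Mv.q, D.blank⟩
    | _ => ⟨St.von, Mv.q, D.blank⟩

noncomputable def loc (l c r : Cell W) : Cell W := locM D l c r (inc D l)

def isV : St → Prop
  | St.z => False
  | St.o => False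
  | St.e => False
  | _ => True

variable {D} {l c r : Cell W}

theorem inc_of_mv (h : l.mv ≠ Mv.no) : inc D l = l.mv := by simp [inc, h]

theorem inc_no (h : l.mv = Mv.no) (h2 : l.st ≠ St.vrun ∨ ¬ D.acc l.w) : inc D l = Mv.no := by
  simp only [inc, h]; simp; tauto

theorem inc_acc (h : l.mv = Mv.no) (h1 : l.st = St.vrun) (h2 : D.acc l.w) : inc D l = Mv.q := by
  simp [inc, h, h1, h2]

theorem mv_of_inc (h : inc D l ≠ Mv.no) (h2 : inc D l ≠ Mv.q) : l.mv = inc D l := by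
  by_cases h3 : l.mv = Mv.no
  · exfalso
    simp only [inc, h3] at h h2
    by_cases h4 : l.st = St.vrun ∧ D.acc l.w
    · simp [h4] at h2
    · simp [h4] at h
  · exact (inc_of_mv h3).symm

theorem loc_no_frozen (h : inc D l = Mv.no) (hc : c.mv ≠ Mv.no) :
    loc D l c r = ⟨c.st, Mv.no, c.w⟩ := by simp [loc, h, locM, hc]

theorem loc_no_acc (h : inc D l = Mv.no) (hc : c.mv = Mv.no) (h1 : c.st = St.vrun)
    (h2 : D.acc c.w) : loc D l c r = ⟨St.vacc, Mv.no, D.blank⟩ := by simp [loc, h, locM, hc, h1, h2]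

theorem loc_no_run (h : inc D l = Mv.no) (hc : c.mv = Mv.no) (h1 : c.st = St.vrun)
    (h2 : ¬ D.acc c.w) : loc D l c r = ⟨St.vrun, Mv.no, D.rule0 c.w r.w⟩ := by
  simp [loc, h, locM, hc, h1, h2]

theorem loc_no_vacc (h : inc D l = Mv.no) (hc : c.mv = Mv.no) (h1 : c.st = St.vacc) :
    loc D l c r = ⟨St.vacc, Mv.no, D.blank⟩ := by
  simp [loc, h, locM, hc, h1]

theorem loc_no_else (h : inc D l = Mv.no) (hc : c.mv = Mv.no) (h1 : c.st ≠ St.vrun)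
    (h2 : c.st ≠ St.vacc) : loc D l c r = ⟨c.st, Mv.no, D.rule l.w c.w r.w⟩ := by
  simp only [loc, h, locM, hc]
  cases hs : c.st <;> simp_all

theorem mv_loc_no : (loc D l c r).mv = Mv.no ↔ inc D l = Mv.no := by
  unfold loc
  rcases hi : inc D l with _ | _ | _ | _ <;> rcases c with ⟨s, m, w⟩ <;> simp only [locM]
  · split_ifs <;> simp
  all_goals cases s <;> simp

theorem loc_no_st (h : inc D l = Mv.no) : (loc D l c r).st = c.st ∨
    (c.mv = Mv.no ∧ c.st = St.vrun ∧ D.acc c.w ∧ (loc D l c r).st = St.vacc) := by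
  simp only [loc, h, locM]
  split_ifs with h1 h2
  · left; rfl
  · right; simp only [not_not] at h1; exact ⟨h1, h2.1, h2.2, rfl⟩
  · left; rfl

theorem loc_st_o : (loc D l c r).st = St.o ↔ c.st = St.o := by
  unfold loc
  rcases hi : inc D l with _ | _ | _ | _ <;> rcases c with ⟨s, m, w⟩ <;> simp only [locM]
  · split_ifs with h1 h2 <;> simp
    rw [h2.1]; simp
  all_goals cases s <;> simp

theorem loc_st_z (hz : c.st = St.z) : (loc D l c r).st = St.z := by
  unfold loc
  rcases c with ⟨s, m, w⟩
  simp only at hz; subst hz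
  rcases hi : inc D l with _ | _ | _ | _ <;> simp only [locM]
  split_ifs with h1 h2
  · rfl
  · simp at h2
  · rfl

theorem loc_isV : isV (loc D l c r).st ↔ isV c.st := by
  unfold loc
  rcases hi : inc D l with _ | _ | _ | _ <;> rcases c with ⟨s, m, w⟩ <;> simp only [locM]
  · split_ifs with h1 h2 <;> simp
    rw [h2.1]; simp [isV]
  all_goals cases s <;> simp [isV]

theorem loc_ne_e (hz : c.st ≠ St.e) : (loc D l c r).st ≠ St.e := by
  unfold loc
  rcases hi : inc D l with _ | _ | _ | _ <;> rcases c with ⟨s, m, w⟩ <;> simp only [locM]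
  · split_ifs with h1 h2
    · exact hz
    · simp
    · exact hz
  all_goals cases s <;> simp_all

theorem loc_e (hz : c.st = St.e) (hn : (loc D l c r).st ≠ St.e) :
    inc D l = Mv.r ∧ (loc D l c r).mv = Mv.q := by
  unfold loc at *
  rcases c with ⟨s, m, w⟩
  simp only at hz; subst hz
  rcases hi : inc D l with _ | _ | _ | _ <;> simp only [hi, locM] at hn ⊢
  · split_ifs at hn with h1 h2
    · simp at hn
    · simp at h2
    · simp at hn
  · simp at hn
  · simp
  · simp at hn

theorem loc_r_e (h : inc D l = Mv.r) (hz : c.st = St.e) :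
    loc D l c r = ⟨St.z, Mv.q, D.blank⟩ := by
  rcases c with ⟨s, m, w⟩
  simp only at hz; subst hz
  simp [loc, h, locM]

theorem loc_r_ne (h : inc D l = Mv.r) (hz : c.st ≠ St.e) :
    (loc D l c r).mv = Mv.r ∧ (loc D l c r).w = D.inp (decide (c.st = St.o)) := by
  rcases c with ⟨s, m, w⟩
  cases s <;> simp_all [loc, locM]

theorem loc_q (h : inc D l = Mv.q) :
    (loc D l c r).mv = Mv.q ∧ (loc D l c r).w = D.blank := by
  rcases c with ⟨s, m, w⟩
  cases s <;> simp_all [loc, locM]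

theorem loc_rq (h : inc D l = Mv.r ∨ inc D l = Mv.q) :
    (loc D l c r).st ≠ St.vrun ∧ (loc D l c r).st ≠ St.vacc ∧
    ((loc D l c r).mv = Mv.r ∨ (loc D l c r).mv = Mv.q) ∧
    ((loc D l c r).w = D.blank ∨ ∃ b, (loc D l c r).w = D.inp b) ∧
    (isV c.st → (loc D l c r).st = St.von) := by
  rcases c with ⟨s, m, w⟩
  rcases h with h | h <;> cases s <;> simp [loc, locM, h, isV]

theorem loc_h_von (h : inc D l = Mv.h) (hz : c.st = St.von) :
    loc D l c r = ⟨St.vrun, Mv.r, D.boot⟩ := by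
  rcases c with ⟨s, m, w⟩
  simp only at hz; subst hz
  simp [loc, h, locM]

theorem loc_h_ne (h : inc D l = Mv.h) (hz : c.st ≠ St.von) : (loc D l c r).mv = Mv.h := by
  rcases c with ⟨s, m, w⟩
  cases s <;> simp_all [loc, locM]

/-- result of an incoming `h` is never `von` -/
theorem loc_h_st (h : inc D l = Mv.h) : (loc D l c r).st ≠ St.von := by
  rcases c with ⟨s, m, w⟩
  cases s <;> simp_all [loc, locM]

theorem loc_mv_h (h : (loc D l c r).mv = Mv.h) : inc D l = Mv.h ∧ (loc D l c r).st ≠ St.vrun := by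
  unfold loc at *
  rcases hi : inc D l with _ | _ | _ | _ <;> rcases c with ⟨s, m, w⟩ <;> simp only [hi, locM] at h ⊢
  · split_ifs at h
  all_goals cases s <;> simp at h ⊢

theorem loc_mv_r (h : (loc D l c r).mv = Mv.r) : inc D l = Mv.h ∨ inc D l = Mv.r := by
  unfold loc at *
  rcases hi : inc D l with _ | _ | _ | _ <;> rcases c with ⟨s, m, w⟩ <;> simp only [hi, locM] at h ⊢
  · split_ifs at h
  all_goals cases s <;> simp at h ⊢

theorem loc_vrun (h : inc D l ≠ Mv.no) (h2 : (loc D l c r).st = St.vrun) :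
    loc D l c r = ⟨St.vrun, Mv.r, D.boot⟩ := by
  unfold loc at *
  rcases hi : inc D l with _ | _ | _ | _ <;> rcases c with ⟨s, m, w⟩ <;> simp only [hi, locM] at h2 ⊢
  · exact absurd hi h
  all_goals cases s <;> simp at h2 ⊢

theorem loc_vacc (h2 : (loc D l c r).st = St.vacc) : inc D l = Mv.no := by
  unfold loc at *
  rcases hi : inc D l with _ | _ | _ | _ <;> rcases c with ⟨s, m, w⟩ <;> simp only [hi, locM] at h2 ⊢
  all_goals cases s <;> simp at h2 ⊢

variable (D) in
def Evo (X : ℕ → ℤ → Cell W) : Prop :=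
  ∀ t i, X (t + 1) i = loc D (X t (i - 1)) (X t i) (X t (i + 1))

theorem Evo.shift {X : ℕ → ℤ → Cell W} (h : Evo D X) (τ : ℕ) (p : ℤ) :
    Evo D (fun t i => X (τ + t) (p + i)) := by
  intro t i
  show X (τ + (t + 1)) (p + i) = _
  rw [← add_assoc, h]
  congr 2 <;> ring

section evo
variable {X : ℕ → ℤ → Cell W} (hX : Evo D X)
include hX

theorem evo_o (t : ℕ) (i : ℤ) : (X t i).st = St.o ↔ (X 0 i).st = St.o := by
  induction t with
  | zero => rfl
  | succ t ih => rw [hX, loc_st_o, ih]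

theorem evo_V (t : ℕ) (i : ℤ) : isV (X t i).st ↔ isV (X 0 i).st := by
  induction t with
  | zero => rfl
  | succ t ih => rw [hX, loc_isV, ih]

theorem evo_z (s t : ℕ) (i : ℤ) (h : (X s i).st = St.z) : (X (s + t) i).st = St.z := by
  induction t with
  | zero => exact h
  | succ t ih => rw [← add_assoc, hX]; exact loc_st_z ih

theorem evo_ne_e (s t : ℕ) (i : ℤ) (h : (X s i).st ≠ St.e) : (X (s + t) i).st ≠ St.e := by
  induction t with
  | zero => exact h
  | succ t ih => rw [← add_assoc, hX]; exact loc_ne_e ih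

theorem evo_mover (t : ℕ) (i : ℤ) (h : (X 0 i).mv ≠ Mv.no) : (X t (i + t)).mv ≠ Mv.no := by
  induction t with
  | zero => simpa using h
  | succ t ih =>
    rw [hX, Ne, mv_loc_no]
    push_cast
    rw [show i + ((t : ℤ) + 1) - 1 = i + t by ring, inc_of_mv ih]; exact ih

/-- diagonal facts after an `r`/`q` mover at `(0,0)` -/
theorem evo_diag (h : (X 0 0).mv = Mv.r ∨ (X 0 0).mv = Mv.q) (j : ℕ) :
    ((X j j).mv = Mv.r ∨ (X j j).mv = Mv.q) ∧ (1 ≤ j → (X j j).st ≠ St.vrun ∧ (X j j).st ≠ St.vacc ∧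
      ((X j j).w = D.blank ∨ ∃ b, (X j j).w = D.inp b)) := by
  induction j with
  | zero => exact ⟨by simpa using h, by simp⟩
  | succ j ih =>
    have h1 : inc D (X j j) = Mv.r ∨ inc D (X j j) = Mv.q := by
      rw [inc_of_mv (by rcases ih.1 with h | h <;> simp [h])]; exact ih.1
    have := loc_rq (c := X j (j + 1)) (r := X j (j + 2)) h1
    have e : X (j + 1) ((j + 1 : ℕ) : ℤ) = loc D (X j j) (X j (j + 1)) (X j (j + 2)) := by
      rw [hX]; push_cast; congr 2 <;> ring
    rw [e]
    exact ⟨this.2.2.1, fun _ => ⟨this.1, this.2.1, this.2.2.2.1⟩⟩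

end evo

theorem R1 (y : ℕ → W) (h0 : y 0 = D.boot) (hI : ∀ j ≥ 1, y j = D.blank ∨ ∃ b, y j = D.inp b) (t j : ℕ)
    (h : t ≤ j) : (gstep D.rule D.rule0)^[t] y j = y j := by
  induction t generalizing j with
  | zero => rfl
  | succ t ih =>
    rw [iterate_succ_apply']
    cases j with
    | zero => omega
    | succ j =>
      simp only [gstep]
      rw [ih j (by omega), ih (j + 1) (by omega), ih (j + 2) (by omega)]
      apply D.hrule
      · cases j with
        | zero => left; exact h0
        | succ j => right; exact hI _ (by omega)
      · exact hI _ (by omega)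
      · exact hI _ (by omega)

theorem gstep_local (y y' : ℕ → W) (t j : ℕ) (h : ∀ i ≤ j + t, y i = y' i) :
    (gstep D.rule D.rule0)^[t] y j = (gstep D.rule D.rule0)^[t] y' j := by
  induction t generalizing j with
  | zero => exact h j (by omega)
  | succ t ih =>
    rw [iterate_succ_apply', iterate_succ_apply']
    cases j with
    | zero =>
      simp only [gstep]
      rw [ih 0 fun i hi => h i (by omega), ih 1 fun i hi => h i (by omega)]
    | succ j =>
      simp only [gstep]
      rw [ih j fun i hi => h i (by omega), ih (j + 1) fun i hi => h i (by omega),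
        ih (j + 2) fun i hi => h i (by omega)]

end CA

end

section
section CA
variable {W : Type} {D : MD W}

section truth
variable {X : ℕ → ℤ → Cell W} (hX : Evo D X)
include hX

theorem evo_succ_nat (t j : ℕ) : X (t + 1) ((j + 1 : ℕ) : ℤ) =
    loc D (X t (j : ℤ)) (X t ((j + 1 : ℕ) : ℤ)) (X t ((j + 2 : ℕ) : ℤ)) := by
  rw [hX]; push_cast; congr 2; ring

theorem truth (h0 : X 0 0 = ⟨St.vrun, Mv.r, D.boot⟩) (T : ℕ)
    (hv : ∀ t ≤ T, (X t 0).st = St.vrun) (hm : ∀ t ≤ T, 0 < t → (X t 0).mv = Mv.no) :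
    ∀ t ≤ T, ∀ j : ℕ, j ≤ t →
      (X t j).w = (gstep D.rule D.rule0)^[t - 1] (fun j : ℕ => (X j j).w) j ∧
      (j < t → (X t j).mv = Mv.no) ∧
      (1 ≤ j → (X t j).st ≠ St.vrun ∧ (X t j).st ≠ St.vacc) := by
  have hd := evo_diag hX (by simp [h0])
  have hR := R1 (D := D) (fun j : ℕ => (X j j).w) (by simp [h0]) (fun j hj => ((hd j).2 hj).2.2)
  intro t
  induction t with
  | zero =>
    intro _ j hj
    obtain rfl : j = 0 := by omega
    exact ⟨rfl, by simp, by simp⟩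
  | succ t ih =>
    intro ht j hj
    have ih := ih (by omega)
    have hinc0 : inc D (X t (0 - 1)) = Mv.no := by
      rw [← mv_loc_no (c := X t 0) (r := X t (0 + 1)), ← hX]; exact hm _ ht (by omega)
    rcases Nat.lt_or_ge t j with htj | htj
    · obtain rfl : j = t + 1 := by omega
      refine ⟨(hR _ _ (by omega)).symm, by omega, fun _ => ?_⟩
      exact ⟨((hd (t + 1)).2 (by omega)).1, ((hd (t + 1)).2 (by omega)).2.1⟩
    · rcases Nat.eq_zero_or_pos t with rfl | htp
      · obtain rfl : j = 0 := by omega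
        refine ⟨?_, fun _ => hm _ ht (by omega), by simp⟩
        rw [Nat.cast_zero, hX]
        rw [loc_no_frozen hinc0 (by simp [h0])]
        rfl
      · -- t ≥ 1
        have hmt : (X t 0).mv = Mv.no := hm t (by omega) htp
        have hna : ¬ D.acc (X t 0).w := by
          intro ha
          have := hv (t + 1) ht
          rw [hX, loc_no_acc hinc0 hmt (hv t (by omega)) ha] at this
          simp at this
        cases j with
        | zero =>
          refine ⟨?_, fun _ => hm _ ht (by omega), by simp⟩
          have h1 := (ih 1 (by omega)).1
          have h0' := (ih 0 (by omega)).1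
          rw [hX]
          push_cast at *
          rw [loc_no_run hinc0 hmt (hv t (by omega)) hna]
          obtain ⟨s, rfl⟩ : ∃ s, t = s + 1 := ⟨t - 1, by omega⟩
          simp only [Nat.add_sub_cancel] at *
          rw [iterate_succ_apply']
          simp only [gstep]
          rw [← h0', ← h1]
        | succ j =>
          have hincj : inc D (X t j) = Mv.no := by
            apply inc_no
            · exact (ih j (by omega)).2.1 (by omega)
            · rcases Nat.eq_zero_or_pos j with rfl | hj
              · right; simpa using hna
              · left; exact ((ih j (by omega)).2.2 hj).1
          have hs := (ih (j + 1) htj).2.2 (by omega)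
          rw [evo_succ_nat hX]
          rcases Nat.lt_or_ge (j + 1) t with h | h
          · rw [loc_no_else hincj ((ih (j + 1) htj).2.1 h) hs.1 hs.2]
            refine ⟨?_, fun _ => rfl, fun _ => hs⟩
            obtain ⟨s, rfl⟩ : ∃ s, t = s + 1 := ⟨t - 1, by omega⟩
            have a1 := (ih j (by omega)).1
            have a2 := (ih (j + 1) (by omega)).1
            have a3 := (ih (j + 2) (by omega)).1
            simp only [Nat.add_sub_cancel] at *
            rw [iterate_succ_apply']
            simp only [gstep]
            rw [← a1, ← a2, ← a3]
          · obtain rfl : t = j + 1 := by omega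
            have : (X (j + 1) ((j + 1 : ℕ) : ℤ)).mv ≠ Mv.no := by
              rcases (hd (j + 1)).1 with h | h <;> rw [h] <;> simp
            rw [loc_no_frozen hincj this]
            exact ⟨(hR _ _ (by omega)).symm, fun _ => rfl, fun _ => hs⟩

/-- structure of diagonal before meeting `e` -/
theorem diag_r (h0 : (X 0 0).mv = Mv.r) (E : ℕ)
    (hE : ∀ j : ℕ, j + 1 < E → (X j ((j + 1 : ℕ) : ℤ)).st ≠ St.e) (j : ℕ) (hj : j < E) :
    (X j j).mv = Mv.r ∧ (1 ≤ j → (X j j).w = D.inp (decide ((X 0 j).st = St.o))) := by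
  induction j with
  | zero => exact ⟨by simpa using h0, by simp⟩
  | succ j ih =>
    have h1 := (ih (by omega)).1
    have h2 := loc_r_ne (D := D) (l := X j j) (c := X j ((j + 1 : ℕ) : ℤ)) (r := X j ((j + 2 : ℕ) : ℤ))
      (by rw [inc_of_mv (by simp [h1])]; exact h1) (hE j (by omega))
    rw [← evo_succ_nat hX] at h2
    refine ⟨h2.1, fun _ => ?_⟩
    rw [h2.2]
    congr 1
    simp only [evo_o hX j]

theorem diag_q (h0 : (X 0 0).mv = Mv.r) (E : ℕ)
    (hE : ∀ j : ℕ, j + 1 < E + 1 → (X j ((j + 1 : ℕ) : ℤ)).st ≠ St.e)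
    (he : (X E ((E + 1 : ℕ) : ℤ)).st = St.e) (j : ℕ) (hj : E + 1 ≤ j) :
    (X j j).mv = Mv.q ∧ (X j j).w = D.blank := by
  induction j, hj using Nat.le_induction with
  | base =>
    have h1 := (diag_r hX h0 (E + 1) hE E (by omega)).1
    rw [evo_succ_nat hX, loc_r_e (by rw [inc_of_mv (by simp [h1])]; exact h1) he]
    simp
  | succ j hj ih =>
    have := loc_q (D := D) (l := X j j) (c := X j ((j + 1 : ℕ) : ℤ)) (r := X j ((j + 2 : ℕ) : ℤ))
      (by rw [inc_of_mv (by simp [ih.1])]; exact ih.1)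
    rwa [← evo_succ_nat hX] at this

/-- the list of the first `L` bits to the right of the origin -/
theorem row_of_E (h0 : X 0 0 = ⟨St.vrun, Mv.r, D.boot⟩) (E : ℕ)
    (hE : ∀ j : ℕ, j + 1 < E + 1 → (X j ((j + 1 : ℕ) : ℤ)).st ≠ St.e)
    (he : (X E ((E + 1 : ℕ) : ℤ)).st = St.e) :
    (fun j : ℕ => (X j j).w) = row0 D.boot D.blank D.inp
      ((List.range E).map fun j => decide ((X 0 ((j + 1 : ℕ) : ℤ)).st = St.o)) := by
  funext j
  cases j with
  | zero => simp [row0, h0]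
  | succ j =>
    simp only [row0, List.getD_cons_succ]
    rcases Nat.lt_or_ge j E with h | h
    · rw [(diag_r hX (by rw [h0]) (E + 1) hE (j + 1) (by omega)).2 (by omega)]
      simp [h]
    · rw [(diag_q hX (by rw [h0]) E hE he (j + 1) (by omega)).2]
      simp [h]

theorem row_agree (h0 : X 0 0 = ⟨St.vrun, Mv.r, D.boot⟩) (L : ℕ)
    (hE : ∀ j : ℕ, j + 1 < L + 1 → (X j ((j + 1 : ℕ) : ℤ)).st ≠ St.e) (j : ℕ) (hj : j ≤ L) :
    (X j j).w = row0 D.boot D.blank D.inp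
      ((List.range L).map fun j => decide ((X 0 ((j + 1 : ℕ) : ℤ)).st = St.o)) j := by
  cases j with
  | zero => simp [row0, h0]
  | succ j =>
    simp only [row0, List.getD_cons_succ]
    rw [(diag_r hX (by rw [h0]) (L + 1) hE (j + 1) (by omega)).2 (by omega)]
    simp [show j < L by omega]

/-- an accepting era yields acceptance for a long prefix, if the first `N` cells are free of `e` -/
theorem accept_long (h0 : X 0 0 = ⟨St.vrun, Mv.r, D.boot⟩) (T : ℕ)
    (hv : ∀ t ≤ T, (X t 0).st = St.vrun) (hm : ∀ t ≤ T, 0 < t → (X t 0).mv = Mv.no)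
    (ha : D.acc (X T 0).w) (N : ℕ)
    (hN : ∀ j : ℕ, j < N → (X j ((j + 1 : ℕ) : ℤ)).st ≠ St.e) :
    ∃ L ≥ N, ∃ t, D.acc ((gstep D.rule D.rule0)^[t] (row0 D.boot D.blank D.inp
      ((List.range L).map fun j => decide ((X 0 ((j + 1 : ℕ) : ℤ)).st = St.o))) 0) := by
  have hT := (truth hX h0 T hv hm T le_rfl 0 (by omega)).1
  push_cast at hT
  rw [hT] at ha
  by_cases h : ∃ E : ℕ, (X E ((E + 1 : ℕ) : ℤ)).st = St.e
  · classical
    refine ⟨Nat.find h, ?_, T - 1, ?_⟩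
    · by_contra hc
      exact hN _ (by omega) (Nat.find_spec h)
    · rw [row_of_E hX h0 (Nat.find h) (fun j hj => Nat.find_min h (by omega)) (Nat.find_spec h)] at ha
      exact ha
  · push Not at h
    refine ⟨N + T, by omega, T - 1, ?_⟩
    rw [gstep_local _ (fun j : ℕ => (X j j).w)]
    · exact ha
    · intro i hi
      exact (row_agree hX h0 (N + T) (fun j _ => h j) i (by omega)).symm

end truth
end CA

end

section

theorem map_range_const (b : ℕ → Bool) (n : ℕ) (h : ∀ j < n, b j = true) :
    (List.range n).map b = List.replicate n true := by
  rw [List.eq_replicate_iff]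
  simp only [List.length_map, List.length_range, List.mem_map, List.mem_range, true_and]
  rintro _ ⟨j, hj, rfl⟩
  exact h j hj

theorem bits_ucode (b : ℕ → Bool) (n k m : ℕ) (h1 : ∀ j ≤ n, b j = true) (h2 : b (n + 1) = false)
    (h3 : ∀ j < k, b (n + 2 + j) = true) (h4 : b (n + 2 + k) = false) :
    (List.range (n + k + 3 + m)).map b =
      ucode n k ((List.range m).map fun j => b (n + k + 3 + j)) := by
  rw [show n + k + 3 + m = (n + 1) + (1 + (k + (1 + m))) by ring]
  rw [List.range_add, List.map_append, map_range_const b _ (fun j hj => h1 j (by omega)), ucode]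
  congr 1
  rw [List.range_add, List.map_append, List.map_append]
  simp only [List.range_one, List.map_cons, List.map_nil, add_zero, h2, List.singleton_append]
  congr 1
  simp only [List.map_map]
  rw [List.range_add, List.map_append, map_range_const _ k]
  · congr 1
    rw [List.range_add, List.map_append, List.map_map]
    simp only [List.range_one, List.map_cons, List.map_nil, List.singleton_append, comp]
    congr 1
    · rw [← h4]; congr 1; omega
    · rw [List.map_map]
      apply List.map_congr_left
      intro j _; simp only [comp]; congr 1; omega
  · intro j hj
    simp only [comp]
    rw [← h3 j hj]; congr 1; omega

section CA
variable {W : Type} {D : MD W}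

section sound
variable {X : ℕ → ℤ → Cell W} (hX : Evo D X)
include hX

theorem era (p : ℤ) (τ0 s t : ℕ) (hs : τ0 + 1 ≤ s) (hst : s ≤ t) (hm : (X s p).mv ≠ Mv.no)
    (hv : (X t p).st = St.vacc) : ∃ τ ≥ τ0, ∃ T, X τ p = ⟨St.vrun, Mv.r, D.boot⟩ ∧
      (∀ t ≤ T, (X (τ + t) p).st = St.vrun) ∧ (∀ t ≤ T, 0 < t → (X (τ + t) p).mv = Mv.no) ∧
      D.acc (X (τ + T) p).w := by
  classical
  set τ := Nat.findGreatest (fun u => (X u p).mv ≠ Mv.no) t with hτ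
  have h1 : s ≤ τ := Nat.le_findGreatest hst hm
  have h2 : (X τ p).mv ≠ Mv.no := Nat.findGreatest_spec (P := fun u => (X u p).mv ≠ Mv.no) hst hm
  have h3 : ∀ u, τ < u → u ≤ t → (X u p).mv = Mv.no := by
    intro u hu hut
    by_contra hc
    exact Nat.findGreatest_is_greatest hu hut hc
  have h4 : τ ≤ t := Nat.findGreatest_le t
  clear_value τ
  obtain ⟨τ', rfl⟩ : ∃ k, τ = k + 1 := ⟨τ - 1, by omega⟩
  have h5 : inc D (X τ' (p - 1)) ≠ Mv.no := by
    rw [hX, Ne, mv_loc_no] at h2; exact h2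
  have hstep : ∀ u, τ' + 1 ≤ u → u + 1 ≤ t → inc D (X u (p - 1)) = Mv.no := by
    intro u hu hut
    have := h3 (u + 1) (by omega) hut
    rwa [hX, mv_loc_no] at this
  have hex : ∃ u, (X (τ' + 1 + u) p).st = St.vacc := ⟨t - (τ' + 1), by
    rw [show τ' + 1 + (t - (τ' + 1)) = t by omega]; exact hv⟩
  have hfs := Nat.find_spec hex
  have hfm : ∀ m < Nat.find hex, (X (τ' + 1 + m) p).st ≠ St.vacc := fun m hm => Nat.find_min hex hm
  have hft : τ' + 1 + Nat.find hex ≤ t := by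
    have := Nat.find_min' hex (m := t - (τ' + 1))
      (by rw [show τ' + 1 + (t - (τ' + 1)) = t by omega]; exact hv)
    omega
  generalize Nat.find hex = v at *
  rcases Nat.eq_zero_or_pos v with rfl | hvp
  · exfalso
    simp only [add_zero] at hfs
    rw [hX] at hfs
    exact h5 (loc_vacc hfs)
  obtain ⟨T, rfl⟩ : ∃ k, v = k + 1 := ⟨v - 1, by omega⟩
  have hT : (X (τ' + 1 + T) p).st = St.vrun ∧ D.acc (X (τ' + 1 + T) p).w := by
    have hi := hstep (τ' + 1 + T) (by omega) (by omega)
    rw [← add_assoc, hX] at hfs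
    rcases loc_no_st (c := X (τ' + 1 + T) p) (r := X (τ' + 1 + T) (p + 1)) hi with h | h
    · exfalso; rw [h] at hfs; exact hfm T (by omega) hfs
    · exact ⟨h.2.1, h.2.2.1⟩
  have hback : ∀ d ≤ T, (X (τ' + 1 + (T - d)) p).st = St.vrun := by
    intro d
    induction d with
    | zero => intro _; exact hT.1
    | succ d ih =>
      intro hd
      have ih := ih (by omega)
      obtain ⟨m, hm⟩ : ∃ m, T - (d + 1) = m := ⟨_, rfl⟩
      rw [show T - d = m + 1 by omega] at ih
      rw [hm]
      have hi := hstep (τ' + 1 + m) (by omega) (by omega)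
      rw [← add_assoc, hX] at ih
      rcases loc_no_st (c := X (τ' + 1 + m) p) (r := X (τ' + 1 + m) (p + 1)) hi with h | h
      · rw [← h]; exact ih
      · rw [h.2.2.2] at ih; simp at ih
  refine ⟨τ' + 1, by omega, T, ?_, ?_, ?_, hT.2⟩
  · have := hback T le_rfl
    simp only [Nat.sub_self, add_zero] at this
    rw [hX] at this ⊢
    exact loc_vrun h5 this
  · intro t ht
    have := hback (T - t) (by omega)
    rwa [show T - (T - t) = t by omega] at this
  · intro u hu hu0
    exact h3 _ (by omega) (by omega)

theorem evo_e_back (s t : ℕ) (i : ℤ) (hst : s ≤ t) (h : (X t i).st = St.e) : (X s i).st = St.e := by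
  by_contra hc
  have := evo_ne_e hX s (t - s) i hc
  rw [show s + (t - s) = t by omega] at this
  exact this h

theorem e_const (p : ℤ) (N : ℕ) : ∃ τ0, ∀ j < N, ∀ τ ≥ τ0, (X τ (p + ((j + 1 : ℕ) : ℤ))).st = St.e →
    ∀ τ', (X τ' (p + ((j + 1 : ℕ) : ℤ))).st = St.e := by
  induction N with
  | zero => exact ⟨0, by simp⟩
  | succ N ih =>
    obtain ⟨τ0, h0⟩ := ih
    by_cases hc : ∀ τ', (X τ' (p + ((N + 1 : ℕ) : ℤ))).st = St.e
    · refine ⟨τ0, fun j hj τ hτ h => ?_⟩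
      rcases Nat.lt_or_ge j N with h1 | h1
      · exact h0 j h1 τ hτ h
      · obtain rfl : j = N := by omega
        exact hc
    · push Not at hc
      obtain ⟨τ1, h1⟩ := hc
      refine ⟨max τ0 τ1, fun j hj τ hτ h => ?_⟩
      rcases Nat.lt_or_ge j N with h2 | h2
      · exact h0 j h2 τ (le_trans (le_max_left _ _) hτ) h
      · obtain rfl : j = N := by omega
        exact absurd (evo_e_back hX τ1 τ _ (le_trans (le_max_right _ _) hτ) h) h1

theorem sound (hL : ∀ N : ℤ, ∃ i ≤ N, (X 0 i).mv ≠ Mv.no) (hR : ∀ N : ℤ, ∃ i ≥ N, (X 0 i).st ≠ St.o)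
    (p : ℤ) (n : ℕ) (hfr : ∃ᶠ t in atTop, (X t p).st = St.vacc ∧
      (∀ j : ℕ, j ≤ n → (X t (p + ((j + 1 : ℕ) : ℤ))).st = St.o) ∧ (X t (p + ((n + 1 + 1 : ℕ) : ℤ))).st ≠ St.o) :
    ∃ k, ∀ N, ∃ z : List Bool, N ≤ z.length ∧ ∃ t, D.acc ((gstep D.rule D.rule0)^[t]
      (row0 D.boot D.blank D.inp (ucode n k z)) 0) := by
  classical
  set b : ℕ → Bool := fun j => decide ((X 0 (p + ((j + 1 : ℕ) : ℤ))).st = St.o) with hb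
  have hbits : (∀ j ≤ n, b j = true) ∧ b (n + 1) = false := by
    obtain ⟨t, -, h1, h2⟩ := hfr.exists
    constructor
    · intro j hj
      have := h1 j hj
      rw [evo_o hX] at this
      simp only [hb, this, decide_true]
    · rw [Ne, evo_o hX] at h2
      simp only [hb, h2, decide_false]
  have hk : ∃ k, b (n + 2 + k) = false := by
    obtain ⟨i, hi, h⟩ := hR (p + n + 3)
    refine ⟨(i - (p + n + 3)).toNat, ?_⟩
    simp only [hb, decide_eq_false_iff_not]
    have : (p + ((n + 2 + (i - (p + n + 3)).toNat + 1 : ℕ) : ℤ)) = i := by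
      push_cast
      rw [Int.toNat_of_nonneg (by omega)]; ring
    rw [this]; exact h
  have hk1 := Nat.find_spec hk
  have hk2 : ∀ m < Nat.find hk, b (n + 2 + m) = true := fun m hm => by
    simpa using Nat.find_min hk hm
  generalize Nat.find hk = k at *
  refine ⟨k, fun N => ?_⟩
  obtain ⟨τ0, hτ0⟩ := e_const hX p (n + k + 3 + N)
  obtain ⟨i, hi, hmi⟩ := hL (p - (τ0 + 1))
  have hms := evo_mover hX (p - i).toNat i hmi
  rw [Int.toNat_of_nonneg (by omega), show i + (p - i) = p by ring] at hms
  obtain ⟨t, ht, hv, -⟩ := (frequently_atTop.1 hfr) (p - i).toNat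
  obtain ⟨τ, hτ, T, e0, e1, e2, e3⟩ := era hX p τ0 _ t (by omega) ht hms hv
  have hY := hX.shift τ p
  have key : ∀ j : ℕ, j < n + k + 3 + N → (X (τ + j) (p + ((j + 1 : ℕ) : ℤ))).st ≠ St.e := by
    intro j hj he
    have hex : ∃ E : ℕ, (X (τ + E) (p + ((E + 1 : ℕ) : ℤ))).st = St.e := ⟨j, he⟩
    have a1 := Nat.find_spec hex
    have a2 : ∀ m < Nat.find hex, (X (τ + m) (p + ((m + 1 : ℕ) : ℤ))).st ≠ St.e :=
      fun m hm => Nat.find_min hex hm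
    have a3 : Nat.find hex ≤ j := Nat.find_min' hex he
    generalize Nat.find hex = E at *
    have b1 := (diag_r hY (by simp [e0]) (E + 1) (fun m hm => a2 m (by omega)) E (by omega)).1
    have b2 := evo_succ_nat hY E E
    rw [loc_r_e (by rw [inc_of_mv (by simp only [b1]; simp)]; exact b1) a1] at b2
    have b3 := hτ0 E (by omega) (τ + E) (by omega) a1 (τ + (E + 1))
    rw [b2] at b3
    simp at b3
  obtain ⟨L, hLN, t', ht'⟩ := accept_long hY (by simpa using e0) T (by simpa using e1)
    (by simpa using e2) (by simpa using e3) (n + k + 3 + N) key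
  obtain ⟨m, rfl⟩ : ∃ m, L = n + k + 3 + (N + m) := ⟨L - (n + k + 3 + N), by omega⟩
  refine ⟨(List.range (N + m)).map fun j => b (n + k + 3 + j), by simp, t', ?_⟩
  rw [← bits_ucode b n k (N + m) hbits.1 hbits.2 hk2 hk1]
  convert ht' using 6
  rename_i j
  simp only [hb]
  congr 1
  rw [evo_o hX (τ + 0)]

end sound
end CA

end

section
section CA
variable {W : Type} {D : MD W}

theorem cell_ext {c d : Cell W} (h1 : c.st = d.st) (h2 : c.mv = d.mv) (h3 : c.w = d.w) : c = d := by
  cases c; cases d; simp_all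

section compl
variable {X : ℕ → ℤ → Cell W} (hX : Evo D X)
include hX

theorem mv_zero (hq : ∀ t, inc D (X t (0 - 1)) = Mv.no) (t : ℕ) : (X (t + 1) 0).mv = Mv.no := by
  rw [hX, mv_loc_no]; exact hq t

theorem exists_acc (h0 : X 0 0 = ⟨St.vrun, Mv.r, D.boot⟩) (hq : ∀ t, inc D (X t (0 - 1)) = Mv.no)
    (ha : ∃ t, D.acc ((gstep D.rule D.rule0)^[t] (fun j : ℕ => (X j j).w) 0)) :
    ∃ T, (X T 0).st = St.vrun ∧ (X T 0).mv = Mv.no ∧ D.acc (X T 0).w := by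
  classical
  have a1 := Nat.find_spec ha
  have a2 : ∀ m < Nat.find ha, ¬ D.acc ((gstep D.rule D.rule0)^[m] (fun j : ℕ => (X j j).w) 0) :=
    fun m hm => Nat.find_min ha hm
  generalize Nat.find ha = t0 at *
  have hm : ∀ t, 0 < t → (X t 0).mv = Mv.no := by
    intro t ht
    obtain ⟨s, rfl⟩ : ∃ s, t = s + 1 := ⟨t - 1, by omega⟩
    exact mv_zero hX hq s
  have hv : ∀ T, T ≤ t0 + 1 → ∀ t ≤ T, (X t 0).st = St.vrun := by
    intro T
    induction T with
    | zero => intro _ t ht; obtain rfl : t = 0 := by omega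
              rw [h0]
    | succ T ih =>
      intro hT t ht
      have ih := ih (by omega)
      rcases Nat.lt_or_ge T t with h | h
      · obtain rfl : t = T + 1 := by omega
        rcases Nat.eq_zero_or_pos T with rfl | hTp
        · rw [hX, loc_no_frozen (hq 0) (by simp [h0])]
          simp [h0]
        · have := (truth hX h0 T ih (fun t _ h => hm t h) T le_rfl 0 (by omega)).1
          rw [Nat.cast_zero] at this
          rw [hX, loc_no_run (hq T) (hm T hTp) (ih T le_rfl)]
          rw [this]
          exact a2 _ (by omega)
      · exact ih t h
  have := (truth hX h0 (t0 + 1) (hv _ le_rfl) (fun t _ h => hm t h) (t0 + 1) le_rfl 0 (by omega)).1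
  rw [Nat.cast_zero] at this
  refine ⟨t0 + 1, hv _ le_rfl _ le_rfl, hm _ (by omega), ?_⟩
  rw [this]; exact a1

theorem sweep (hq : ∀ t, inc D (X t (0 - 1)) = Mv.no) (h0 : (X 0 0).st = St.vrun)
    (h1 : (X 0 0).mv = Mv.no) (h2 : D.acc (X 0 0).w) (s : ℕ) :
    X (s + 1) 0 = ⟨St.vacc, Mv.no, D.blank⟩ ∧
    (∀ i : ℕ, 1 ≤ i → i ≤ s + 1 → (i ≤ s → (X (s + 1) i).mv = Mv.no) ∧ (X (s + 1) i).w = D.blank ∧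
      (X (s + 1) i).st ≠ St.vrun ∧ (X (s + 1) i).st ≠ St.vacc) ∧
    (X (s + 1) ((s + 1 : ℕ) : ℤ)).mv = Mv.q := by
  induction s with
  | zero =>
    have e := evo_succ_nat hX 0 0
    have hi : inc D (X 0 ((0 : ℕ) : ℤ)) = Mv.q := inc_acc h1 h0 h2
    refine ⟨by rw [hX, loc_no_acc (hq 0) h1 h0 h2], ?_, ?_⟩
    · intro i hi1 hi2
      obtain rfl : i = 0 + 1 := by omega
      rw [e]
      have a := loc_rq (c := X 0 ((0 + 1 : ℕ) : ℤ)) (r := X 0 ((0 + 2 : ℕ) : ℤ)) (Or.inr hi)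
      exact ⟨by omega, (loc_q hi).2, a.1, a.2.1⟩
    · rw [e]; exact (loc_q hi).1
  | succ s ih =>
    obtain ⟨i0, i1, i2⟩ := ih
    have hinc : inc D (X (s + 1) ((s + 1 : ℕ) : ℤ)) = Mv.q := by
      rw [inc_of_mv (by rw [i2]; simp)]; exact i2
    refine ⟨?_, ?_, ?_⟩
    · rw [hX, loc_no_vacc (hq _) (by rw [i0]) (by rw [i0])]
    · intro i hi1 hi2
      obtain ⟨j, rfl⟩ : ∃ j, i = j + 1 := ⟨i - 1, by omega⟩
      rw [evo_succ_nat hX]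
      rcases Nat.lt_or_ge j (s + 1) with hj | hj
      · have hij : inc D (X (s + 1) (j : ℤ)) = Mv.no ∧ (X (s + 1) (j : ℤ)).w = D.blank := by
          rcases Nat.eq_zero_or_pos j with rfl | hj0
          · rw [Nat.cast_zero, i0]
            exact ⟨inc_no rfl (Or.inl (by simp)), rfl⟩
          · have := i1 j hj0 (by omega)
            exact ⟨inc_no (this.1 (by omega)) (Or.inl this.2.2.1), this.2.1⟩
        have hc := i1 (j + 1) (by omega) (by omega)
        rcases Nat.lt_or_ge j s with hj' | hj'
        · rw [loc_no_else hij.1 (hc.1 (by omega)) hc.2.2.1 hc.2.2.2]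
          refine ⟨fun _ => rfl, ?_, hc.2.2⟩
          simp only
          rw [hij.2, hc.2.1, (i1 (j + 2) (by omega) (by omega)).2.1]
          exact D.hrule _ _ _ (Or.inr (Or.inl rfl)) (Or.inl rfl) (Or.inl rfl)
        · obtain rfl : j = s := by omega
          rw [loc_no_frozen hij.1 (by rw [i2]; simp)]
          exact ⟨fun _ => rfl, hc.2.1, hc.2.2⟩
      · obtain rfl : j = s + 1 := by omega
        have a := loc_rq (c := X (s + 1) ((s + 1 + 1 : ℕ) : ℤ)) (r := X (s + 1) ((s + 1 + 2 : ℕ) : ℤ))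
          (Or.inr hinc)
        exact ⟨by omega, (loc_q hinc).2, a.1, a.2.1⟩
    · rw [evo_succ_nat hX]; exact (loc_q hinc).1

theorem finish (h0 : X 0 0 = ⟨St.vrun, Mv.r, D.boot⟩) (hq : ∀ t, inc D (X t (0 - 1)) = Mv.no)
    (hE : ∃ E : ℕ, (X E ((E + 1 : ℕ) : ℤ)).st = St.e) (n k : ℕ)
    (b1 : ∀ j : ℕ, j ≤ n → (X 0 ((j + 1 : ℕ) : ℤ)).st = St.o)
    (b2 : (X 0 ((n + 2 : ℕ) : ℤ)).st = St.z)
    (b3 : ∀ j : ℕ, j < k → (X 0 ((n + 2 + j + 1 : ℕ) : ℤ)).st = St.o)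
    (b4 : (X 0 ((n + 2 + k + 1 : ℕ) : ℤ)).st = St.z)
    (hacc : ∀ z, ∃ t, D.acc ((gstep D.rule D.rule0)^[t]
      (row0 D.boot D.blank D.inp (ucode n k z)) 0)) :
    ∃ t, X t 0 = ⟨St.vacc, Mv.no, D.blank⟩ ∧
      (∀ j : ℕ, j ≤ n → X t ((j + 1 : ℕ) : ℤ) = ⟨St.o, Mv.no, D.blank⟩) ∧
      X t ((n + 2 : ℕ) : ℤ) = ⟨St.z, Mv.no, D.blank⟩ := by
  classical
  have a1 := Nat.find_spec hE
  have a2 : ∀ m < Nat.find hE, (X m ((m + 1 : ℕ) : ℤ)).st ≠ St.e := fun m hm => Nat.find_min hE hm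
  generalize Nat.find hE = E at *
  have hEe := evo_e_back hX 0 E _ (by omega) a1
  have hEge : n + k + 3 ≤ E := by
    by_contra hc
    rcases Nat.lt_or_ge n E with h | h
    · rcases Nat.lt_or_ge (n + 1) E with h' | h'
      · rcases Nat.lt_or_ge E (n + 2 + k) with h'' | h''
        · have := b3 (E - (n + 2)) (by omega)
          rw [show n + 2 + (E - (n + 2)) + 1 = E + 1 by omega] at this
          rw [this] at hEe; simp at hEe
        · rw [show E + 1 = n + 2 + k + 1 by omega, b4] at hEe
          simp at hEe
      · rw [show E + 1 = n + 2 by omega, b2] at hEe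
        simp at hEe
    · rw [b1 E h] at hEe; simp at hEe
  have hrow := row_of_E hX h0 E (fun j hj => a2 j (by omega)) a1
  obtain ⟨m, rfl⟩ : ∃ m, E = n + k + 3 + m := ⟨E - (n + k + 3), by omega⟩
  rw [bits_ucode _ n k m (fun j hj => by simp only [b1 j hj]; simp) (by simp only [b2, show n + 1 + 1 = n + 2 by omega]; simp)
    (fun j hj => by simp only [b3 j hj]; simp) (by simp only [b4]; simp)] at hrow
  have hacc' := hacc ((List.range m).map fun j => decide ((X 0 ((n + k + 3 + j + 1 : ℕ) : ℤ)).st = St.o))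
  rw [← hrow] at hacc'
  obtain ⟨T, c1, c2, c3⟩ := exists_acc hX h0 hq hacc'
  have hZ := hX.shift T 0
  obtain ⟨d1, d2, d3⟩ := sweep hZ (fun t => by simpa using hq (T + t)) (by simpa using c1)
    (by simpa using c2) (by simpa using c3) (n + 2)
  simp only [zero_add] at d1 d2
  refine ⟨T + (n + 2 + 1), d1, ?_, ?_⟩
  · intro j hj
    have := d2 (j + 1) (by omega) (by omega)
    refine cell_ext ?_ (this.1 (by omega)) this.2.1
    rw [evo_o hX]; exact b1 j hj
  · have := d2 (n + 2) (by omega) (by omega)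
    refine cell_ext ?_ (this.1 (by omega)) this.2.1
    have := evo_z hX 0 (T + (n + 2 + 1)) _ b2
    rwa [zero_add] at this

/-- back-tracing of movers -/
theorem trace_h (t : ℕ) (i : ℤ) (h : (X t i).mv = Mv.h) (s : ℕ) (hs : s ≤ t) :
    (X (t - s) (i - s)).mv = Mv.h := by
  induction s with
  | zero => simpa using h
  | succ s ih =>
    have ih := ih (by omega)
    rw [show t - s = (t - (s + 1)) + 1 by omega, hX] at ih
    have h1 := (loc_mv_h ih).1
    have h2 := mv_of_inc (by rw [h1]; simp) (by rw [h1]; simp)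
    rw [h1] at h2
    rw [← h2]; congr 2; push_cast; ring

theorem trace_r (t : ℕ) (i : ℤ) (h : (X t i).mv = Mv.h ∨ (X t i).mv = Mv.r) (s : ℕ) (hs : s ≤ t) :
    (X (t - s) (i - s)).mv = Mv.h ∨ (X (t - s) (i - s)).mv = Mv.r := by
  induction s with
  | zero => simpa using h
  | succ s ih =>
    have ih := ih (by omega)
    rw [show t - s = (t - (s + 1)) + 1 by omega, hX] at ih
    have h1 := ih.elim (fun h => Or.inl (loc_mv_h h).1) loc_mv_r
    have h2 := mv_of_inc (by rcases h1 with h1 | h1 <;> rw [h1] <;> simp)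
      (by rcases h1 with h1 | h1 <;> rw [h1] <;> simp)
    rw [← h2] at h1
    rw [show i - s - 1 = i - ((s + 1 : ℕ) : ℤ) by push_cast; ring] at h1
    exact h1

theorem keep_q (t : ℕ) (i : ℤ) (h : (X t i).mv = Mv.q) (s : ℕ) : (X (t + s) (i + s)).mv = Mv.q := by
  induction s with
  | zero => simpa using h
  | succ s ih =>
    rw [← add_assoc, hX]
    rw [show i + ((s + 1 : ℕ) : ℤ) - 1 = i + s by push_cast; ring]
    exact (loc_q (by rw [inc_of_mv (by simp [ih])]; exact ih)).1

/-- some `e` must remain to be met -/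
theorem exists_E (τ : ℕ) (a M : ℤ) (hM : ∀ i, M < i → (X 0 i).st = St.e ∧ (X 0 i).mv = Mv.no)
    (ha : ∀ i, i < a → (X 0 i).mv = Mv.no) :
    ∃ E : ℕ, (X (τ + E) ((E + 1 : ℕ) : ℤ)).st = St.e := by
  by_contra hc
  push Not at hc
  have main : ∀ i : ℕ, ∃ u : ℕ, (X u (M.toNat + i : ℤ)).mv = Mv.r ∧
      (X (u + 1) (M.toNat + i + 1 : ℤ)).mv = Mv.q := by
    intro i
    have h1 := hc (M.toNat + i)
    have h2 : ∃ v, (X v ((M.toNat + i + 1 : ℕ) : ℤ)).st ≠ St.e := ⟨_, h1⟩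
    classical
    have f1 := Nat.find_spec h2
    have f2 : ∀ m < Nat.find h2, (X m ((M.toNat + i + 1 : ℕ) : ℤ)).st = St.e :=
      fun m hm => not_not.1 (Nat.find_min h2 hm)
    generalize Nat.find h2 = v at *
    have hv : v ≠ 0 := by
      rintro rfl
      exact f1 (hM _ (by omega)).1
    obtain ⟨u, rfl⟩ : ∃ u, v = u + 1 := ⟨v - 1, by omega⟩
    have f3 := f2 u (by omega)
    refine ⟨u, ?_⟩
    have f4 := f1
    rw [hX] at f4
    have g := loc_e f3 f4
    rw [← hX] at g
    have h2 := mv_of_inc (by rw [g.1]; simp) (by rw [g.1]; simp)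
    rw [g.1] at h2
    push_cast at h2 g
    rw [show (M.toNat : ℤ) + i + 1 - 1 = M.toNat + i by ring] at h2
    exact ⟨h2, g.2⟩
  choose u hu1 hu2 using main
  have hδ : ∀ i : ℕ, ((M.toNat + i : ℤ) - u i) ∈ Set.Icc a M := by
    intro i
    have := trace_r hX (u i) _ (Or.inr (hu1 i)) (u i) le_rfl
    rw [Nat.sub_self] at this
    constructor
    · by_contra h
      rw [ha _ (by omega)] at this
      simp at this
    · by_contra h
      rw [(hM _ (by omega)).2] at this
      simp at this
  obtain ⟨i, j, hij, he⟩ := Finite.exists_ne_map_eq_of_infinite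
    (fun i : ℕ => (⟨(M.toNat + i : ℤ) - u i, hδ i⟩ : Set.Icc a M))
  have he : (M.toNat + i : ℤ) - u i = (M.toNat + j : ℤ) - u j := congrArg Subtype.val he
  have aux : ∀ i j : ℕ, i < j → (M.toNat + i : ℤ) - u i = (M.toNat + j : ℤ) - u j → False := by
    intro i j hlt he
    have q := keep_q hX _ _ (hu2 i) (j - (i + 1))
    have e1 : u i + 1 + (j - (i + 1)) = u j := by omega
    have e2 : (M.toNat : ℤ) + i + 1 + ((j - (i + 1) : ℕ) : ℤ) = M.toNat + j := by omega
    rw [e1, e2, hu1 j] at q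
    simp at q
  rcases Nat.lt_or_gt_of_ne hij with h | h
  · exact aux _ _ h he
  · exact aux _ _ h he.symm

end compl
end CA

end

section
section CA
variable {W : Type} (D : MD W)

noncomputable def stepD (x : ℤ → Cell W) : ℤ → Cell W := fun i => loc D (x (i - 1)) (x i) (x (i + 1))

theorem evo_run (x : ℤ → Cell W) : Evo D (fun t => (stepD D)^[t] x) := by
  intro t i
  simp only [iterate_succ_apply']
  rfl

variable {D}

theorem mv_cases {m : Mv} (h : m ≠ Mv.no) (h2 : m ≠ Mv.h) : m = Mv.r ∨ m = Mv.q := by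
  cases m <;> simp_all

theorem run_local {X Y : ℕ → ℤ → Cell W} (hX : Evo D X) (hY : Evo D Y) (a : ℤ)
    (h : ∀ i, a ≤ i → X 0 i = Y 0 i) (t : ℕ) (i : ℤ) (hi : a + t ≤ i) : X t i = Y t i := by
  induction t generalizing i with
  | zero => exact h i (by simpa using hi)
  | succ t ih =>
    push_cast at hi
    rw [hX, hY, ih _ (by omega), ih _ (by omega), ih _ (by omega)]

/-- The infinite stream eventually delivers `h` to every cell. -/
theorem stream_h {X : ℕ → ℤ → Cell W} (hX : Evo D X) (d : ℤ) (h1 : ∀ i, i ≤ d → (X 0 i).st = St.z)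
    (h2 : ∀ i, i < d → (X 0 i).mv = Mv.h) (a : ℕ) :
    ∃ L, 1 ≤ L ∧ ∀ l, L ≤ l → (X (a + l) (d + a)).mv = Mv.h := by
  have base : ∀ t, ∀ i, i ≤ d → (X t i).st = St.z ∧ (i < d ∨ 1 ≤ t → (X t i).mv = Mv.h) := by
    intro t
    induction t with
    | zero =>
      intro i hi
      refine ⟨h1 i hi, ?_⟩
      rintro (h | h)
      · exact h2 i h
      · omega
    | succ t ih =>
      intro i hi
      have hl := (ih (i - 1) (by omega)).2 (Or.inl (by omega))
      rw [hX]
      refine ⟨loc_st_z (ih i hi).1, fun _ => loc_h_ne (by rw [inc_of_mv (by simp [hl])]; exact hl) ?_⟩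
      rw [(ih i hi).1]; simp
  induction a with
  | zero =>
    refine ⟨1, le_rfl, fun l hl => ?_⟩
    simpa using (base l d le_rfl).2 (Or.inr hl)
  | succ a ih =>
    obtain ⟨L, hL, h⟩ := ih
    refine ⟨L + 1, by omega, fun l hl => ?_⟩
    obtain ⟨m, rfl⟩ : ∃ m, l = m + 1 := ⟨l - 1, by omega⟩
    have e : d + ((a + 1 : ℕ) : ℤ) - 1 = d + a := by push_cast; ring
    have q1 := h m (by omega)
    have q2 := h (m + 1) (by omega)
    have hne : (X (a + (m + 1)) (d + ((a + 1 : ℕ) : ℤ))).st ≠ St.von := by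
      rw [← add_assoc, hX, e]
      exact loc_h_st (by rw [inc_of_mv (by simp [q1])]; exact q1)
    rw [show a + 1 + (m + 1) = a + (m + 1) + 1 by ring, hX, e]
    exact loc_h_ne (by rw [inc_of_mv (by rw [q2]; simp)]; exact q2) hne

/-- no further disturbance from the left -/
theorem quiet {X : ℕ → ℤ → Cell W} (hX : Evo D X) (τ : ℕ)
    (h1 : ∀ i, i < -(τ + 1 : ℤ) → (X 0 i).mv = Mv.no) (h2 : ∀ i, i ≤ -(τ + 1 : ℤ) → (X 0 i).st = St.z)
    (h3 : (X τ (-1)).mv = Mv.h) (t : ℕ) :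
    (∀ i, i ≤ 0 → i - t < -(τ + 1 : ℤ) → (X t i).mv = Mv.no) ∧
    (∀ i, i < 0 → i - t ≤ -(τ + 1 : ℤ) → (X t i).st ≠ St.vrun) := by
  induction t with
  | zero =>
    refine ⟨fun i _ hi => h1 i (by simpa using hi), fun i _ hi => ?_⟩
    rw [h2 i (by simpa using hi)]; simp
  | succ t ih =>
    have hi : ∀ i, i ≤ 0 → i - ((t + 1 : ℕ) : ℤ) < -(τ + 1 : ℤ) → inc D (X t (i - 1)) = Mv.no := by
      intro i h0 h
      push_cast at h
      exact inc_no (ih.1 _ (by omega) (by omega)) (Or.inl (ih.2 _ (by omega) (by omega)))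
    refine ⟨fun i h0 h => ?_, fun i h0 h => ?_⟩
    · rw [hX, mv_loc_no]; exact hi i h0 h
    · rcases lt_or_eq_of_le h with h' | h'
      · rw [hX]
        have hp := ih.2 i h0 (by push_cast at h; omega)
        rcases loc_no_st (c := X t i) (r := X t (i + 1)) (hi i (by omega) h') with q | q
        · rw [q]; exact hp
        · rw [q.2.2.2]; simp
      · have := trace_h hX τ (-1) h3 (τ - (t + 1)) (by omega)
        push_cast at h'
        rw [show τ - (τ - (t + 1)) = t + 1 by omega,
          show (-1 : ℤ) - ((τ - (t + 1) : ℕ) : ℤ) = i by omega] at this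
        rw [hX] at this ⊢
        exact (loc_mv_h this).2

set_option maxHeartbeats 1000000 in
theorem complete (n k : ℕ) (hacc : ∀ z, ∃ t, D.acc ((gstep D.rule D.rule0)^[t]
      (row0 D.boot D.blank D.inp (ucode n k z)) 0)) (x0 : ℤ → Cell W) (h0 : (x0 0).st = St.von)
    (b1 : ∀ j : ℕ, j ≤ n → (x0 ((j + 1 : ℕ) : ℤ)).st = St.o)
    (b2 : (x0 ((n + 2 : ℕ) : ℤ)).st = St.z)
    (b3 : ∀ j : ℕ, j < k → (x0 ((n + 2 + j + 1 : ℕ) : ℤ)).st = St.o)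
    (b4 : (x0 ((n + 2 + k + 1 : ℕ) : ℤ)).st = St.z) (M0 N : ℕ) :
    ∃ x : ℤ → Cell W, (∀ i : ℤ, -(M0 : ℤ) ≤ i → i ≤ M0 → x i = x0 i) ∧ ∃ t ≥ N,
      (stepD D)^[t] x 0 = ⟨St.vacc, Mv.no, D.blank⟩ ∧
      (∀ j : ℕ, j ≤ n → (stepD D)^[t] x ((j + 1 : ℕ) : ℤ) = ⟨St.o, Mv.no, D.blank⟩) ∧
      (stepD D)^[t] x ((n + 2 : ℕ) : ℤ) = ⟨St.z, Mv.no, D.blank⟩ := by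
  classical
  set M : ℕ := M0 + n + k + 10 with hM
  set x' : ℤ → Cell W := fun i => if i < -((M : ℤ) + 1 + N) then ⟨St.z, Mv.h, D.blank⟩
    else if i = -((M : ℤ) + 1 + N) then ⟨St.z, Mv.r, D.blank⟩
    else if i < -(M : ℤ) then ⟨St.z, Mv.no, D.blank⟩
    else if i ≤ M then x0 i else ⟨St.e, Mv.no, D.blank⟩ with hx'
  have x'1 : ∀ i, i < -((M : ℤ) + 1 + N) → x' i = ⟨St.z, Mv.h, D.blank⟩ := fun i hi => by
    simp only [hx', if_pos hi]
  have x'2 : x' (-((M : ℤ) + 1 + N)) = ⟨St.z, Mv.r, D.blank⟩ := by simp [hx']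
  have x'3 : ∀ i, -(M : ℤ) ≤ i → i ≤ M → x' i = x0 i := fun i hi hi2 => by
    simp only [hx']
    rw [if_neg (by omega), if_neg (by omega), if_neg (by omega), if_pos hi2]
  have x'4 : ∀ i, (M : ℤ) < i → x' i = ⟨St.e, Mv.no, D.blank⟩ := fun i hi => by
    simp only [hx']
    rw [if_neg (by omega), if_neg (by omega), if_neg (by omega), if_neg (by omega)]
  clear_value x'
  have hX' := evo_run D x'
  set X' : ℕ → ℤ → Cell W := fun t => (stepD D)^[t] x' with hX'd
  have X'0 : X' 0 = x' := rfl
  clear_value X'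
  have hex : ∃ l, 1 ≤ l ∧ (X' (M + N + l) (-1)).mv = Mv.h := by
    obtain ⟨L, hL1, hL⟩ := stream_h hX' (-((M : ℤ) + 1 + N))
      (fun i hi => by
        rw [X'0]
        rcases lt_or_eq_of_le hi with h | h
        · rw [x'1 i h]
        · rw [h, x'2])
      (fun i hi => by rw [X'0, x'1 i hi]) (M + N)
    refine ⟨L, hL1, ?_⟩
    have := hL L le_rfl
    rwa [show -((M : ℤ) + 1 + N) + ((M + N : ℕ) : ℤ) = -1 by push_cast; ring] at this
  have j1 := Nat.find_spec hex
  have j2 : ∀ m < Nat.find hex, ¬ (1 ≤ m ∧ (X' (M + N + m) (-1)).mv = Mv.h) :=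
    fun m hm => Nat.find_min hex hm
  generalize Nat.find hex = J at *
  obtain ⟨J, rfl⟩ : ∃ J', J = J' + 1 := ⟨J - 1, by omega⟩
  have hprev : (X' (M + N + J) (-1)).mv = Mv.r ∨ (X' (M + N + J) (-1)).mv = Mv.q := by
    rcases Nat.eq_zero_or_pos J with rfl | hJ
    · have := (evo_diag (hX'.shift 0 (-((M : ℤ) + 1 + N))) (by rw [add_zero, add_zero, X'0, x'2]; simp) (M + N)).1
      simp only [zero_add] at this
      rwa [show -((M : ℤ) + 1 + N) + ((M + N : ℕ) : ℤ) = -1 by push_cast; ring] at this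
    · have q1 : (X' (M + N + J) (-1)).mv ≠ Mv.h := fun h => j2 J (by omega) ⟨hJ, h⟩
      have q2 := evo_mover hX' (M + N + J) (-((M : ℤ) + 1 + N) - J)
        (by rw [X'0, x'1 _ (by omega)]; simp)
      rw [show -((M : ℤ) + 1 + N) - J + ((M + N + J : ℕ) : ℤ) = -1 by push_cast; ring] at q2
      exact mv_cases q2 q1
  have hvon : (X' (M + N + (J + 1)) 0).st = St.von := by
    rw [← add_assoc, hX']
    refine (loc_rq ?_).2.2.2.2 ?_
    · rw [zero_sub, inc_of_mv (by rcases hprev with h | h <;> rw [h] <;> simp)]; exact hprev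
    · rw [evo_V hX', X'0, x'3 0 (by omega) (by omega), h0]; trivial
  have hstart : X' (M + N + (J + 1) + 1) 0 = ⟨St.vrun, Mv.r, D.boot⟩ := by
    rw [hX']
    exact loc_h_von (by rw [zero_sub, inc_of_mv (by rw [j1.2]; simp)]; exact j1.2) hvon
  set τ : ℕ := M + N + (J + 1) with hτ
  -- truncation
  set x : ℤ → Cell W := fun i => if i < -(τ + 1 : ℤ) then ⟨St.z, Mv.no, D.blank⟩ else x' i with hx
  have x1 : ∀ i, i < -(τ + 1 : ℤ) → x i = ⟨St.z, Mv.no, D.blank⟩ := fun i hi => by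
    simp only [hx, if_pos hi]
  have x2 : ∀ i, -(τ + 1 : ℤ) ≤ i → x i = x' i := fun i hi => by
    simp only [hx]; rw [if_neg (by omega)]
  clear_value x
  have hX := evo_run D x
  refine ⟨x, fun i hi1 hi2 => by rw [x2 i (by omega), x'3 i (by omega) (by omega)], ?_⟩
  set X : ℕ → ℤ → Cell W := fun t => (stepD D)^[t] x with hXd
  have X0 : X 0 = x := rfl
  suffices h : ∃ t ≥ N, X t 0 = ⟨St.vacc, Mv.no, D.blank⟩ ∧
      (∀ j : ℕ, j ≤ n → X t ((j + 1 : ℕ) : ℤ) = ⟨St.o, Mv.no, D.blank⟩) ∧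
      X t ((n + 2 : ℕ) : ℤ) = ⟨St.z, Mv.no, D.blank⟩ from h
  clear_value X
  have hloc := run_local hX hX' (-(τ + 1 : ℤ)) (fun i hi => by rw [X0, X'0]; exact x2 i hi)
  have hs : X (τ + 1) 0 = ⟨St.vrun, Mv.r, D.boot⟩ := by
    rw [hloc (τ + 1) 0 (by push_cast; omega)]; exact hstart
  have hm1 : (X τ (-1)).mv = Mv.h := by
    rw [hloc τ (-1) (by omega)]; exact j1.2
  have hquiet := quiet hX τ (fun i hi => by rw [X0, x1 i hi]) (fun i hi => by
    rw [X0]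
    rcases lt_or_eq_of_le hi with h | h
    · rw [x1 i h]
    · rw [x2 i h.ge, x'1 i (by omega)]) hm1
  have hxM : ∀ i, -(M : ℤ) ≤ i → i ≤ M → x i = x0 i := fun i hi1 hi2 => by
    rw [x2 i (by omega), x'3 i hi1 hi2]
  have hE := exists_E hX (τ + 1) (-(τ + 1 : ℤ)) M
    (fun i hi => by rw [X0, x2 i (by omega), x'4 i hi]; simp)
    (fun i hi => by rw [X0, x1 i hi])
  have hY := hX.shift (τ + 1) 0
  obtain ⟨t, t1, t2, t3⟩ := finish hY (by simpa using hs)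
    (fun t => by
      have := hquiet (τ + 1 + t)
      rw [zero_add]
      exact inc_no (this.1 _ (by omega) (by push_cast; omega))
        (Or.inl (this.2 _ (by omega) (by push_cast; omega))))
    (by simpa using hE) n k
    (fun j hj => by
      rw [zero_add, evo_o hX, X0, hxM _ (by omega) (by omega)]; exact b1 j hj)
    (by
      have := evo_z hX 0 (τ + 1) ((n + 2 : ℕ) : ℤ) (by rw [X0, hxM _ (by omega) (by omega)]; exact b2)
      rw [zero_add] at this
      rw [zero_add]; exact this)
    (fun j hj => by
      rw [zero_add, evo_o hX, X0, hxM _ (by omega) (by omega)]; exact b3 j hj)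
    (by
      have := evo_z hX 0 (τ + 1) ((n + 2 + k + 1 : ℕ) : ℤ)
        (by rw [X0, hxM _ (by omega) (by omega)]; exact b4)
      rw [zero_add] at this
      rw [zero_add]; exact this) hacc
  simp only [zero_add] at t1 t2 t3
  exact ⟨τ + 1 + t, by omega, t1, t2, t3⟩

end CA

end

section

theorem residual_inf {B : Type} [TopologicalSpace B] [DiscreteTopology B] (S : Set B) (b : B) (hb : b ∈ S)
    (I : Set ℤ) (hI : I.Infinite) : {x : ℤ → B | ∃ i ∈ I, x i ∈ S} ∈ residual (ℤ → B) := by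
  apply residual_of_dense_open
  · have : {x : ℤ → B | ∃ i ∈ I, x i ∈ S} = ⋃ i ∈ I, (fun x : ℤ → B => x i) ⁻¹' S := by
      ext x; simp
    rw [this]
    exact isOpen_biUnion fun i _ => (isOpen_discrete S).preimage (continuous_apply i)
  · rw [dense_iff_inter_open]
    rintro V hV ⟨x, hx⟩
    obtain ⟨F, u, hu, hF⟩ := isOpen_pi_iff.1 hV x hx
    obtain ⟨i, hi, hiF⟩ := hI.exists_notMem_finset F
    refine ⟨update x i b, hF ?_, i, hi, by simpa using hb⟩
    intro j hj
    have : j ≠ i := by rintro rfl; exact hiF hj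
    rw [update_of_ne this]
    exact (hu j hj).2

theorem word_iff {B : Type} (y : ℤ → B) (i : ℤ) (n : ℕ) (c0 c1 c2 : B) :
    word y i (c0 :: (List.replicate (n + 1) c1 ++ [c2])).length =
      c0 :: (List.replicate (n + 1) c1 ++ [c2]) ↔
    y i = c0 ∧ (∀ j : ℕ, j ≤ n → y (i + ((j + 1 : ℕ) : ℤ)) = c1) ∧ y (i + ((n + 2 : ℕ) : ℤ)) = c2 := by
  rw [word_eq]
  have hl : (c0 :: (List.replicate (n + 1) c1 ++ [c2])).length = (n + 1 + 1) + 1 := by simp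
  rw [hl, List.range_succ_eq_map, List.map_cons, List.map_map, List.range_succ, List.map_append,
    List.cons.injEq]
  constructor
  · rintro ⟨h0, h1⟩
    obtain ⟨h2, h3⟩ := List.append_inj' h1 (by simp)
    refine ⟨by simpa using h0, ?_, ?_⟩
    · intro j hj
      rw [List.eq_replicate_iff] at h2
      exact h2.2 _ (List.mem_map.2 ⟨j, List.mem_range.2 (by omega), rfl⟩)
    · simpa [add_assoc, one_add_one_eq_two] using h3
  · rintro ⟨h0, h1, h2⟩
    refine ⟨by simpa using h0, ?_⟩
    congr 1
    · rw [List.eq_replicate_iff]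
      refine ⟨by simp, ?_⟩
      intro b hb
      obtain ⟨j, hj, rfl⟩ := List.mem_map.1 hb
      exact h1 j (by have := List.mem_range.1 hj; omega)
    · simpa [add_assoc, one_add_one_eq_two] using h2

theorem cell_finite {W : Type} [Finite W] : Finite (Cell W) := by
  have h1 : Finite St := Finite.of_injective
    (fun s : St => (match s with
      | St.z => 0 | St.o => 1 | St.e => 2 | St.von => 3 | St.vrun => 4 | St.vacc => 5
      | St.vused => 6 : Fin 7)) (by intro a b h; cases a <;> cases b <;> simp_all)
  have h2 : Finite Mv := Finite.of_injective
    (fun s : Mv => (match s with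
      | Mv.no => 0 | Mv.h => 1 | Mv.r => 2 | Mv.q => 3 : Fin 4))
      (by intro a b h; cases a <;> cases b <;> simp_all)
  exact Finite.of_injective (fun c : Cell W => (c.st, c.mv, c.w))
    (fun a b h => by cases a; cases b; simp_all)

theorem main {A : Type} [Fintype A] [Primcodable A] (P : Set (List A))
    (hP : SigmaLang 3 P) :
    ∃ (m : ℕ) (f : (ℤ → Fin m) → (ℤ → Fin m)) (φ : List A → List (Fin m)),
      IsCA f ∧ Computable φ ∧ ∀ w : List A, w ∈ P ↔ φ w ∈ lang (genLimitSet f) := by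
  obtain ⟨F, Q, hF, hQ, hPQ, hD⟩ := normal_form P hP
  obtain ⟨W, hW, rule, rule0, boot, blank, inp, acc, hrule, hacc⟩ := exists_machine F hF
  let D : MD W := ⟨rule, rule0, boot, blank, inp, acc, hrule⟩
  have hA : ∀ n k z, (∃ t, D.acc ((gstep D.rule D.rule0)^[t]
      (row0 D.boot D.blank D.inp (ucode n k z)) 0)) ↔ Q n k z.length := by
    intro n k z
    rw [← hD]
    exact hacc _
  clear_value D
  have hfin := cell_finite (W := W)
  obtain ⟨m, ⟨e⟩⟩ := Finite.exists_equiv_fin (Cell W)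
  let f : (ℤ → Fin m) → (ℤ → Fin m) := fun x i =>
    e (loc D (e.symm (x (i - 1))) (e.symm (x i)) (e.symm (x (i + 1))))
  have hfs : ∀ x i, f x i = e (loc D (e.symm (x (i - 1))) (e.symm (x i)) (e.symm (x (i + 1)))) :=
    fun _ _ => rfl
  have hit : ∀ t x i, f^[t] x i = e ((stepD D)^[t] (fun i => e.symm (x i)) i) := by
    intro t x
    induction t with
    | zero => intro i; simp
    | succ t ih =>
      intro i
      rw [iterate_succ_apply', iterate_succ_apply', hfs]
      simp only [ih, Equiv.symm_apply_apply, stepD]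
  have hcont : Continuous f := by
    refine continuous_pi fun i => ?_
    have : (fun x : ℤ → Fin m => f x i) =
        (fun p : Fin m × Fin m × Fin m => e (loc D (e.symm p.1) (e.symm p.2.1) (e.symm p.2.2))) ∘
        (fun x => (x (i - 1), x i, x (i + 1))) := rfl
    rw [this]
    exact continuous_of_discreteTopology.comp (by fun_prop)
  let c0 : Cell W := ⟨St.vacc, Mv.no, D.blank⟩
  let c1 : Cell W := ⟨St.o, Mv.no, D.blank⟩
  let c2 : Cell W := ⟨St.z, Mv.no, D.blank⟩
  refine ⟨m, f, fun w => e c0 :: (List.replicate (Encodable.encode w + 1) (e c1) ++ [e c2]),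
    ⟨hcont, ?_⟩, ?_, fun w => ?_⟩
  · funext x i
    simp only [comp, shift, hfs]
    rw [show i - 1 + 1 = i + 1 - 1 by ring]
  · apply Primrec.to_comp
    exact Primrec.list_cons.comp (Primrec.const _) (Primrec.list_append.comp
      (primrec_replicate _ (Primrec.succ.comp Primrec.encode) _) (Primrec.const _))
  · constructor
    · intro hw
      obtain ⟨k, hk⟩ := (hPQ w).1 hw
      set n := Encodable.encode w
      set U : Set (ℤ → Fin m) := {x | (e.symm (x 0)).st = St.von ∧
        (∀ j ∈ Finset.range (n + 1), (e.symm (x ((j + 1 : ℕ) : ℤ))).st = St.o) ∧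
        (e.symm (x ((n + 2 : ℕ) : ℤ))).st = St.z ∧
        (∀ j ∈ Finset.range k, (e.symm (x ((n + 2 + j + 1 : ℕ) : ℤ))).st = St.o) ∧
        (e.symm (x ((n + 2 + k + 1 : ℕ) : ℤ))).st = St.z} with hU
      have hop : ∀ (i : ℤ) (s : St), IsOpen {x : ℤ → Fin m | (e.symm (x i)).st = s} := by
        intro i s
        have h1 : Continuous (fun x : ℤ → Fin m => x i) := continuous_apply i
        exact (isOpen_discrete {b : Fin m | (e.symm b).st = s}).preimage h1
      apply mem_lang f hcont _ U
      · have : U = {x | (e.symm (x 0)).st = St.von} ∩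
          ((⋂ j ∈ Finset.range (n + 1), {x | (e.symm (x ((j + 1 : ℕ) : ℤ))).st = St.o}) ∩
          ({x | (e.symm (x ((n + 2 : ℕ) : ℤ))).st = St.z} ∩
          ((⋂ j ∈ Finset.range k, {x | (e.symm (x ((n + 2 + j + 1 : ℕ) : ℤ))).st = St.o}) ∩
          {x | (e.symm (x ((n + 2 + k + 1 : ℕ) : ℤ))).st = St.z}))) := by
          ext x
          simp only [hU, mem_inter_iff, mem_iInter, mem_ofPred_eq]
        rw [this]
        exact (hop _ _).inter ((isOpen_biInter_finset fun j _ => hop _ _).inter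
          ((hop _ _).inter ((isOpen_biInter_finset fun j _ => hop _ _).inter (hop _ _))))
      · refine ⟨fun i => e ⟨if i = 0 then St.von else if i = ((n + 2 : ℕ) : ℤ) then St.z
          else if i = ((n + 2 + k + 1 : ℕ) : ℤ) then St.z else St.o, Mv.no, D.blank⟩, ?_⟩
        simp only [hU, mem_ofPred_eq, Equiv.symm_apply_apply]
        refine ⟨if_pos trivial, fun j hj => ?_, ?_, fun j hj => ?_, ?_⟩
        · rw [Finset.mem_range] at hj
          rw [if_neg (by omega), if_neg (by omega), if_neg (by omega)]
        · rw [if_neg (by omega), if_pos trivial]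
        · rw [Finset.mem_range] at hj
          rw [if_neg (by omega), if_neg (by omega), if_neg (by omega)]
        · rw [if_neg (by omega), if_neg (by omega), if_pos trivial]
      · rintro x0 ⟨u0, u1, u2, u3, u4⟩ M N
        obtain ⟨x, hx, t, ht, t0, t1, t2⟩ := complete (D := D) n k (fun z => (hA n k z).2 (hk _))
          (fun i => e.symm (x0 i)) u0 (fun j hj => u1 j (Finset.mem_range.2 (by omega))) u2
          (fun j hj => u3 j (Finset.mem_range.2 hj)) u4 M N
        refine ⟨fun i => e (x i), fun i h1 h2 => by simp only [hx i h1 h2, Equiv.apply_symm_apply], t, ht, ?_⟩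
        rw [word_iff]
        simp only [hit, Equiv.symm_apply_apply, zero_add]
        exact ⟨by rw [t0], fun j hj => by rw [t1 j hj], by rw [t2]⟩
    · intro hl
      by_contra hw
      revert hl
      set n := Encodable.encode w with hn
      set G : Set (ℤ → Fin m) := (⋂ N : ℤ, {x | ∃ i ∈ Iic N, x i ∈ {b | (e.symm b).mv ≠ Mv.no}}) ∩
        (⋂ N : ℤ, {x | ∃ i ∈ Ici N, x i ∈ {b | (e.symm b).st ≠ St.o}}) with hG
      apply not_mem_lang f _ G
      · apply inter_mem
        · rw [countable_iInter_mem]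
          intro N
          exact residual_inf _ (e ⟨St.z, Mv.r, D.blank⟩) (by simp) _ (Set.Iic_infinite N)
        · rw [countable_iInter_mem]
          intro N
          exact residual_inf _ (e ⟨St.z, Mv.r, D.blank⟩) (by simp) _ (Set.Ici_infinite N)
      · rintro x ⟨x1, x2⟩ p
        rw [mem_iInter] at x1 x2
        by_contra hc
        have hc : ∃ᶠ t in atTop, word (f^[t] x) p
            (e c0 :: (List.replicate (n + 1) (e c1) ++ [e c2])).length =
            e c0 :: (List.replicate (n + 1) (e c1) ++ [e c2]) := fun h => hc h
        apply hw
        rw [hPQ]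
        obtain ⟨k, hk⟩ := sound (evo_run D (fun i => e.symm (x i))) x1 x2 p n (hc.mono (by
          intro t ht
          rw [word_iff] at ht
          simp only [hit, EmbeddingLike.apply_eq_iff_eq] at ht
          refine ⟨by rw [ht.1], fun j hj => by rw [ht.2.1 j hj], ?_⟩
          have := ht.2.2
          rw [show n + 1 + 1 = n + 2 by ring, this]; simp [c2]))
        refine ⟨k, fun a => ?_⟩
        obtain ⟨z, hz, h⟩ := hk a
        exact hQ _ _ _ _ hz ((hA _ _ _).1 h)


end

/-- every `Σ⁰₃` set of words many-one reduces to the language of the generic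
limit set of some cellular automaton: there are a finite alphabet `Fin m`, a CA `f` on
`(Fin m)^ℤ` and a total computable map `φ` with `w ∈ P ↔ φ(w) ∈ L(ω̃(f))`. -/
theorem stmt5 {A : Type} [Fintype A] [Primcodable A] (P : Set (List A))
    (hP : SigmaLang 3 P) :
    ∃ (m : ℕ) (f : (ℤ → Fin m) → (ℤ → Fin m)) (φ : List A → List (Fin m)),
      IsCA f ∧ Computable φ ∧ ∀ w : List A, w ∈ P ↔ φ w ∈ lang (genLimitSet f) :=
  main P hP

end Gls
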